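/- Every binary completely regular code of length 16 with minimum distance 6 is completely transitive. -/

import Mathlib

open Set

/-- Distance from a vertex to a code in the binary Hamming space. -/
noncomputable def distToCode {m : ℕ} (C : Set (Fin m → ZMod 2)) (x : Fin m → ZMod 2) : ℕ :=
  sInf {d | ∃ c ∈ C, hammingDist x c = d}

/-- `C` has minimum distance `δ`. -/
def IsMinDist {m : ℕ} (C : Set (Fin m → ZMod 2)) (δ : ℕ) : Prop :=
  (∀ x ∈ C, ∀ y ∈ C, x ≠ y → δ ≤ hammingDist x y) ∧
  ∃ x ∈ C, ∃ y ∈ C, x ≠ y ∧ hammingDist x y = δ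

/-- `C` is completely regular: the number of codewords at distance `k` from `γ`
depends only on `distToCode C γ` and `k`. -/
def IsCompletelyRegular {m : ℕ} (C : Set (Fin m → ZMod 2)) : Prop :=
  ∀ γ γ' : Fin m → ZMod 2, distToCode C γ = distToCode C γ' →
    ∀ k : ℕ, {c ∈ C | hammingDist γ c = k}.ncard = {c ∈ C | hammingDist γ' c = k}.ncard

/-- A permutation of `F_2^m` is an automorphism of the Hamming graph iff it has
the form `x ↦ (x ∘ σ⁻¹) + v` for a coordinate permutation `σ` and `v ∈ F_2^m`. -/
def IsHammingAut {m : ℕ} (f : Equiv.Perm (Fin m → ZMod 2)) : Prop :=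
  ∃ (σ : Equiv.Perm (Fin m)) (v : Fin m → ZMod 2),
    ∀ x : Fin m → ZMod 2, f x = (fun i => x (σ.symm i)) + v

/-- `C` is completely transitive: some group `X` of Hamming-graph automorphisms
preserving `C` has each cell of the distance partition as a single orbit. -/
def IsCompletelyTransitive {m : ℕ} (C : Set (Fin m → ZMod 2)) : Prop :=
  ∃ X : Subgroup (Equiv.Perm (Fin m → ZMod 2)),
    (∀ g ∈ X, IsHammingAut g ∧ ⇑g '' C = C) ∧
    ∀ i : ℕ, ∀ x : Fin m → ZMod 2, distToCode C x = i →
      {y | distToCode C y = i} = {y | ∃ g ∈ X, g x = y}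

/-!
Translate a codeword to the zero word and regard words as subsets of the 16 coordinates. Since at
distance 3 the number of nearby codewords is constant, counting around each 4-set shows that every
triple lies in exactly four codewords of weight 6 (*hexads*), and that the 4-sets contained in no
hexad (*tetrads*) form a quadruple system. Through the incidence vectors of the points with the
codewords of weight 8, the coordinates become an affine space `𝔽₂⁴` whose planes are the tetrads.

In these terms the code lies in the extended Hamming code and consists of cosets of the first-order
Reed–Muller code represented by quadratic forms. The minimum distance makes the differences of
these forms nondegenerate, and the hexads make their number at least 8, so they are a Kerdock set.
With one hexad normalized there are only two such sets, and they are exchanged by a coordinate swap.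
Hence the code is the Nordstrom–Robinson code, with prescribed labels on any three coordinates.

Finally, a vertex differs from a nearest codeword by a set that is a tetrad or has at most three
elements. The freedom on three coordinates matches any two such sets of the same size, a tetrad
being determined by three of its points.
-/

open scoped Finset symmDiff

namespace NordstromRobinson

section FiniteSets

variable {α : Type*} [DecidableEq α]

theorem symmDiff_empty (s : Finset α) : s ∆ ∅ = s :=
  symmDiff_bot s

theorem subset_iff_card_inter_eq {s t : Finset α} : s ⊆ t ↔ #(s ∩ t) = #s := by
  rw [← Finset.inter_eq_left]
  exact ⟨congrArg Finset.card, fun h =>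
    Finset.eq_of_subset_of_card_le Finset.inter_subset_left h.ge⟩

theorem card_symmDiff_add_two_mul_card_inter (s t : Finset α) :
    #(s ∆ t) + 2 * #(s ∩ t) = #s + #t := by
  have hdisj : Disjoint (s \ t) (t \ s) := disjoint_sdiff_sdiff
  have hcard : #(s ∆ t) = #(s \ t) + #(t \ s) := Finset.card_union_of_disjoint hdisj
  have hs := Finset.card_sdiff_add_card_inter s t
  have ht := Finset.card_sdiff_add_card_inter t s
  rw [Finset.inter_comm] at ht
  lia

theorem card_insert_symmDiff_of_mem {p : α} {s t : Finset α} (hps : p ∉ s) (hpt : p ∈ t) :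
    #(insert p s ∆ t) + 1 = #(s ∆ t) := by
  have hinter : insert p s ∩ t = insert p (s ∩ t) := Finset.insert_inter_of_mem hpt
  have := card_symmDiff_add_two_mul_card_inter (insert p s) t
  have := card_symmDiff_add_two_mul_card_inter s t
  rw [hinter, Finset.card_insert_of_notMem (by simp [hps]), Finset.card_insert_of_notMem hps] at *
  lia

theorem card_insert_symmDiff_of_notMem {p : α} {s t : Finset α} (hps : p ∉ s) (hpt : p ∉ t) :
    #(insert p s ∆ t) = #(s ∆ t) + 1 := by
  have hinter : insert p s ∩ t = s ∩ t := Finset.insert_inter_of_notMem hpt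
  have := card_symmDiff_add_two_mul_card_inter (insert p s) t
  have := card_symmDiff_add_two_mul_card_inter s t
  rw [hinter, Finset.card_insert_of_notMem hps] at *
  lia

theorem card_symmDiff_triangle (s t u : Finset α) : #(s ∆ u) ≤ #(s ∆ t) + #(t ∆ u) :=
  (Finset.card_le_card (symmDiff_triangle s t u)).trans (Finset.card_union_le _ _)

end FiniteSets

section Counting

variable {α : Type*} [DecidableEq α]

/-- The codewords of weight `k` containing `x`. Codewords of weight 6 are called hexads, those of
weight 8 octads. -/
def wordsThrough (D : Finset (Finset α)) (k : ℕ) (x : Finset α) : Finset (Finset α) :=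
  {c ∈ D | #c = k ∧ x ⊆ c}

/-- A tetrad is a 4-set lying in no codeword of weight 6. -/
def IsTetrad (D : Finset (Finset α)) (x : Finset α) : Prop :=
  #x = 4 ∧ ∀ c ∈ D, #c = 6 → ¬ x ⊆ c

instance (D : Finset (Finset α)) : DecidablePred (IsTetrad D) :=
  fun _ => inferInstanceAs (Decidable (_ ∧ _))

variable {D : Finset (Finset α)} {L k : ℕ} {c c' T x O : Finset α} {p q : α}

theorem mem_wordsThrough : c ∈ wordsThrough D k x ↔ c ∈ D ∧ #c = k ∧ x ⊆ c := by
  simp [wordsThrough]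

variable [Fintype α]

/-- A binary code of length 16, its words regarded as subsets of `α`, that contains the zero word,
has minimum distance at least 6, and has exactly `L + 1 > 1` codewords at distance 3 from each
vertex that has at least one. Translating a code with these metric properties moves any codeword
to `∅`. -/
structure IsPointedCode (D : Finset (Finset α)) (L : ℕ) : Prop where
  card_univ : Fintype.card α = 16
  empty_mem : ∅ ∈ D
  six_le_card_symmDiff : ∀ c ∈ D, ∀ c' ∈ D, c ≠ c' → 6 ≤ #(c ∆ c')
  card_at_three : ∀ x, (∃ c ∈ D, #(x ∆ c) = 3) → #{c ∈ D | #(x ∆ c) = 3} = L + 1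
  pos : 0 < L

/-- The points `p` outside `x` for which `insert p x` is at distance 3 from some codeword. -/
def nearPoints (D : Finset (Finset α)) (x : Finset α) : Finset α :=
  {p ∈ xᶜ | ∃ c ∈ D, #(insert p x ∆ c) = 3}

theorem sum_card_wordsThrough_insert (D : Finset (Finset α)) (k : ℕ) (x : Finset α) :
    ∑ p ∈ xᶜ, #(wordsThrough D k (insert p x)) = #(wordsThrough D k x) * (k - #x) := by
  have hthrough (p : α) :
      wordsThrough D k (insert p x) = {c ∈ wordsThrough D k x | p ∈ c} := by
    ext c
    simp only [wordsThrough, Finset.insert_subset_iff, Finset.mem_filter]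
    tauto
  have hoff (c) (hc : c ∈ wordsThrough D k x) : #{p ∈ xᶜ | p ∈ c} = k - #x := by
    obtain ⟨-, hcard, hsub⟩ := mem_wordsThrough.1 hc
    rw [show ({p ∈ xᶜ | p ∈ c} : Finset α) = c \ x by ext; simp [and_comm],
      Finset.card_sdiff_of_subset hsub, hcard]
  calc ∑ p ∈ xᶜ, #(wordsThrough D k (insert p x))
      = ∑ c ∈ wordsThrough D k x, #{p ∈ xᶜ | p ∈ c} := by
        simp only [hthrough]
        exact Finset.sum_card_bipartiteAbove_eq_sum_card_bipartiteBelow _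
    _ = #(wordsThrough D k x) * (k - #x) := by
        rw [Finset.sum_congr rfl hoff, Finset.sum_const, smul_eq_mul]

namespace IsPointedCode

theorem eq_of_card_lt (h : IsPointedCode D L) (hc : c ∈ D) (hc' : c' ∈ D)
    (hlt : #c + #c' < 2 * #(c ∩ c') + 6) : c = c' := by
  by_contra hne
  have := h.six_le_card_symmDiff c hc c' hc' hne
  have := card_symmDiff_add_two_mul_card_inter c c'
  lia

theorem eq_of_subset (h : IsPointedCode D L) (hc : c ∈ D) (hc' : c' ∈ D) (hxc : x ⊆ c)
    (hxc' : x ⊆ c') (hlt : #c + #c' < 2 * #x + 6) : c = c' :=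
  h.eq_of_card_lt hc hc' <| by
    have := Finset.card_le_card (Finset.subset_inter hxc hxc')
    lia

theorem eq_empty_or_six_le_card (h : IsPointedCode D L) (hc : c ∈ D) : c = ∅ ∨ 6 ≤ #c := by
  refine or_iff_not_imp_left.2 fun hne => ?_
  simpa [symmDiff_empty] using h.six_le_card_symmDiff c hc ∅ h.empty_mem hne

theorem card_wordsThrough_le_one (h : IsPointedCode D L) (hk : k < #x + 3) :
    #(wordsThrough D k x) ≤ 1 := by
  simp only [Finset.card_le_one, mem_wordsThrough]
  rintro c ⟨hc, hck, hxc⟩ c' ⟨hc', hck', hxc'⟩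
  exact h.eq_of_subset hc hc' hxc hxc' (by lia)

theorem card_wordsThrough_six_of_card_eq_three (h : IsPointedCode D L) (hT : #T = 3) :
    #(wordsThrough D 6 T) = L := by
  have hfilter : ({c ∈ D | #(T ∆ c) = 3} : Finset _) = insert ∅ (wordsThrough D 6 T) := by
    ext c
    simp only [Finset.mem_filter, Finset.mem_insert, mem_wordsThrough]
    have hadd := card_symmDiff_add_two_mul_card_inter T c
    constructor
    · rintro ⟨hc, hdist⟩
      refine (h.eq_empty_or_six_le_card hc).imp_right fun hsix => ?_
      have hle := Finset.card_le_card (Finset.inter_subset_left : T ∩ c ⊆ T)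
      exact ⟨hc, by lia, Finset.inter_eq_left.1
        (Finset.eq_of_subset_of_card_le Finset.inter_subset_left (by lia))⟩
    · rintro (rfl | ⟨hc, hcard, hsub⟩)
      · simpa [symmDiff_empty, hT] using h.empty_mem
      · rw [Finset.inter_eq_left.2 hsub] at hadd
        exact ⟨hc, by lia⟩
  have hcard := h.card_at_three T ⟨∅, h.empty_mem, by simpa [symmDiff_empty] using hT⟩
  rw [hfilter, Finset.card_insert_of_notMem (by simp [mem_wordsThrough])] at hcard
  lia

theorem exists_hexad_of_card_eq_three (h : IsPointedCode D L) (hT : #T = 3) :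
    ∃ B ∈ D, #B = 6 ∧ T ⊆ B := by
  obtain ⟨B, hB⟩ : (wordsThrough D 6 T).Nonempty := by
    rw [← Finset.card_pos, h.card_wordsThrough_six_of_card_eq_three hT]
    exact h.pos
  exact ⟨B, mem_wordsThrough.1 hB⟩

theorem card_hexads_meeting_in_three (h : IsPointedCode D L) (hx : #x = 4) :
    #{c ∈ D | #c = 6 ∧ #(x ∩ c) = 3} + 4 * #(wordsThrough D 6 x) = 4 * L := by
  have hterm (c) (_ : c ∈ D) : #{T ∈ x.powersetCard 3 | #c = 6 ∧ T ⊆ c} =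
      (if #c = 6 ∧ #(x ∩ c) = 3 then 1 else 0) + 4 * (if #c = 6 ∧ x ⊆ c then 1 else 0) := by
    by_cases hsix : #c = 6
    · have hpow : ({T ∈ x.powersetCard 3 | #c = 6 ∧ T ⊆ c} : Finset _)
          = (x ∩ c).powersetCard 3 := by
        ext T
        simp only [hsix, true_and, Finset.mem_filter, Finset.mem_powersetCard,
          Finset.subset_inter_iff]
        tauto
      have hle : #(x ∩ c) ≤ 4 := hx ▸ Finset.card_le_card Finset.inter_subset_left
      rw [hpow, Finset.card_powersetCard]
      simp only [hsix, subset_iff_card_inter_eq, hx, true_and]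
      interval_cases #(x ∩ c) <;> rfl
    · simp [hsix]
  have hcount : ∑ T ∈ x.powersetCard 3, #(wordsThrough D 6 T) = 4 * L := by
    rw [Finset.sum_congr rfl fun T hT =>
      h.card_wordsThrough_six_of_card_eq_three (Finset.mem_powersetCard.1 hT).2,
      Finset.sum_const, Finset.card_powersetCard, hx, smul_eq_mul]
    rfl
  rw [← hcount]
  calc #{c ∈ D | #c = 6 ∧ #(x ∩ c) = 3} + 4 * #(wordsThrough D 6 x)
      = ∑ c ∈ D, #{T ∈ x.powersetCard 3 | #c = 6 ∧ T ⊆ c} := by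
        rw [Finset.sum_congr rfl hterm, Finset.sum_add_distrib, ← Finset.mul_sum,
          ← Finset.card_filter, ← Finset.card_filter, wordsThrough]
    _ = ∑ T ∈ x.powersetCard 3, #(wordsThrough D 6 T) :=
        (Finset.sum_card_bipartiteAbove_eq_sum_card_bipartiteBelow
          fun T c => #c = 6 ∧ T ⊆ c).symm

theorem card_filter_card_insert_symmDiff_eq_three (h : IsPointedCode D L) (hx : #x = 4)
    (hc : c ∈ D) :
    #{p ∈ xᶜ | #(insert p x ∆ c) = 3} =
      3 * (if #c = 6 ∧ #(x ∩ c) = 3 then 1 else 0) + 4 * (if #c = 8 ∧ x ⊆ c then 1 else 0) +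
        10 * (if #c = 6 ∧ x ⊆ c then 1 else 0) := by
  have hle : #(x ∩ c) ≤ 4 := hx ▸ Finset.card_le_card Finset.inter_subset_left
  have hdist := card_symmDiff_add_two_mul_card_inter x c
  have hweight : #c = 0 ∨ 6 ≤ #c :=
    (h.eq_empty_or_six_le_card hc).imp_left fun he => by rw [he, Finset.card_empty]
  have hin : #(c \ x) + #(x ∩ c) = #c := by
    rw [Finset.inter_comm]; exact Finset.card_sdiff_add_card_inter c x
  have hout : #(x ∪ c)ᶜ + (#c + 4 - #(x ∩ c)) = 16 := by
    rw [← h.card_univ, ← Finset.card_compl_add_card (x ∪ c)]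
    have := Finset.card_union_add_card_inter x c
    lia
  have hsplit : ({p ∈ xᶜ | #(insert p x ∆ c) = 3} : Finset α) =
      if #(x ∆ c) = 4 then c \ x else if #(x ∆ c) = 2 then (x ∪ c)ᶜ else ∅ := by
    ext p
    by_cases hpx : p ∈ x
    · split_ifs <;> simp [hpx]
    by_cases hpc : p ∈ c
    · have := card_insert_symmDiff_of_mem hpx hpc
      simp only [Finset.mem_filter, Finset.mem_compl, hpx, not_false_eq_true, true_and]
      split_ifs <;> simp [hpx, hpc] <;> lia
    · have := card_insert_symmDiff_of_notMem hpx hpc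
      simp only [Finset.mem_filter, Finset.mem_compl, hpx, not_false_eq_true, true_and]
      split_ifs <;> simp [hpx, hpc] <;> lia
  rw [hsplit]
  simp only [subset_iff_card_inter_eq, hx, apply_ite Finset.card, Finset.card_empty]
  split_ifs <;> lia

theorem succ_mul_card_nearPoints (h : IsPointedCode D L) (hx : #x = 4) :
    (L + 1) * #(nearPoints D x) + 2 * #(wordsThrough D 6 x) =
      12 * L + 4 * #(wordsThrough D 8 x) := by
  have hnear : ∑ p ∈ xᶜ, #{c ∈ D | #(insert p x ∆ c) = 3} = (L + 1) * #(nearPoints D x) := by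
    have hterm (p) (_ : p ∈ xᶜ) : #{c ∈ D | #(insert p x ∆ c) = 3} =
        (L + 1) * (if ∃ c ∈ D, #(insert p x ∆ c) = 3 then 1 else 0) := by
      split_ifs with hp
      · rw [h.card_at_three _ hp, mul_one]
      · rw [mul_zero, Finset.card_eq_zero, Finset.filter_eq_empty_iff]
        exact fun c hc hdist => hp ⟨c, hc, hdist⟩
    rw [Finset.sum_congr rfl hterm, ← Finset.mul_sum, ← Finset.card_filter, nearPoints]
  have hwords : ∑ p ∈ xᶜ, #{c ∈ D | #(insert p x ∆ c) = 3} =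
      3 * #{c ∈ D | #c = 6 ∧ #(x ∩ c) = 3} + 4 * #(wordsThrough D 8 x) +
        10 * #(wordsThrough D 6 x) := by
    refine (Finset.sum_card_bipartiteAbove_eq_sum_card_bipartiteBelow
      fun p c => #(insert p x ∆ c) = 3).trans ?_
    refine (Finset.sum_congr rfl fun c hc =>
      h.card_filter_card_insert_symmDiff_eq_three hx hc).trans ?_
    simp only [Finset.sum_add_distrib, ← Finset.mul_sum, ← Finset.card_filter, wordsThrough]
  have := h.card_hexads_meeting_in_three hx
  lia

theorem card_nearPoints_le (h : IsPointedCode D L) (hx : #x = 4) : #(nearPoints D x) ≤ 12 := by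
  have hle : #(nearPoints D x) ≤ #xᶜ := Finset.card_le_card (Finset.filter_subset _ _)
  rwa [Finset.card_compl, h.card_univ, hx] at hle

theorem card_wordsThrough_six_eq_ite (h : IsPointedCode D L) (hx : #x = 4) :
    #(wordsThrough D 6 x) = if ¬ IsTetrad D x then 1 else 0 := by
  by_cases ht : IsTetrad D x
  · rw [if_neg (not_not.2 ht), Finset.card_eq_zero, wordsThrough, Finset.filter_eq_empty_iff]
    exact fun c hc hcx => ht.2 c hc hcx.1 hcx.2
  · rw [if_pos ht]
    refine le_antisymm (h.card_wordsThrough_le_one (by lia)) (Finset.card_pos.2 ?_)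
    obtain ⟨c, hc, hcard, hxc⟩ : ∃ c ∈ D, #c = 6 ∧ x ⊆ c := by
      by_contra! hnone
      exact ht ⟨hx, hnone⟩
    exact ⟨c, mem_wordsThrough.2 ⟨hc, hcard, hxc⟩⟩

theorem card_filter_not_isTetrad (h : IsPointedCode D L) (hT : #T = 3) :
    #{p ∈ Tᶜ | ¬ IsTetrad D (insert p T)} = 3 * L := by
  have hsum := sum_card_wordsThrough_insert D 6 T
  rw [h.card_wordsThrough_six_of_card_eq_three hT, hT, Finset.sum_congr rfl fun p hp =>
    h.card_wordsThrough_six_eq_ite (x := insert p T)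
      (by rw [Finset.card_insert_of_notMem (Finset.mem_compl.1 hp), hT]),
    ← Finset.card_filter] at hsum
  lia

theorem card_filter_isTetrad (h : IsPointedCode D L) (hT : #T = 3) :
    #{p ∈ Tᶜ | IsTetrad D (insert p T)} + 3 * L = 13 := by
  rw [← h.card_filter_not_isTetrad hT, Finset.card_filter_add_card_filter_not,
    Finset.card_compl, h.card_univ, hT]

theorem exists_card_eq_three (h : IsPointedCode D L) : ∃ T : Finset α, #T = 3 := by
  obtain ⟨T, -, hT⟩ := Finset.exists_subset_card_eq (s := Finset.univ (α := α)) (n := 3)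
    (by rw [Finset.card_univ, h.card_univ]; norm_num)
  exact ⟨T, hT⟩

theorem card_nearPoints_of_subset_hexad (h : IsPointedCode D L) (hx : #x = 4) (hc : c ∈ D)
    (hcard : #c = 6) (hxc : x ⊆ c) : #(nearPoints D x) = 10 := by
  have hxdist : #(x ∆ c) = 2 := by
    have := card_symmDiff_add_two_mul_card_inter x c
    rw [Finset.inter_eq_left.2 hxc] at this
    lia
  have hnear : nearPoints D x = cᶜ := by
    ext p
    simp only [nearPoints, Finset.mem_filter, Finset.mem_compl]
    refine ⟨fun ⟨hpx, c', hc', hdist⟩ hpc => ?_, fun hpc => ⟨fun hpx => hpc (hxc hpx), c, hc, ?_⟩⟩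
    · have hdist_c := card_insert_symmDiff_of_mem hpx hpc
      have hne : c ≠ c' := by rintro rfl; lia
      have := h.six_le_card_symmDiff c hc c' hc' hne
      have := card_symmDiff_triangle c (insert p x) c'
      rw [symmDiff_comm c (insert p x)] at this
      lia
    · rw [card_insert_symmDiff_of_notMem (fun hpx => hpc (hxc hpx)) hpc, hxdist]
  rw [hnear, Finset.card_compl, h.card_univ, hcard]

theorem two_mul_card_wordsThrough_eight (h : IsPointedCode D L) (hx : #x = 4)
    (ht : ¬ IsTetrad D x) : 2 * #(wordsThrough D 8 x) + L = 6 := by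
  have hsix : #(wordsThrough D 6 x) = 1 := by
    rw [h.card_wordsThrough_six_eq_ite hx, if_pos ht]
  obtain ⟨c, hc⟩ := Finset.card_pos.1 (hsix ▸ Nat.one_pos)
  obtain ⟨hcD, hcard, hxc⟩ := mem_wordsThrough.1 hc
  have hcount := h.succ_mul_card_nearPoints hx
  rw [h.card_nearPoints_of_subset_hexad hx hcD hcard hxc, hsix] at hcount
  lia

theorem eq_two_or_eq_four (h : IsPointedCode D L) : L = 2 ∨ L = 4 := by
  obtain ⟨T, hT⟩ := h.exists_card_eq_three
  have hle := h.card_filter_isTetrad hT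
  obtain ⟨p, hp⟩ : ({p ∈ Tᶜ | ¬ IsTetrad D (insert p T)} : Finset α).Nonempty := by
    rw [← Finset.card_pos, h.card_filter_not_isTetrad hT]
    have := h.pos
    lia
  obtain ⟨hpT, ht⟩ := Finset.mem_filter.1 hp
  have := h.two_mul_card_wordsThrough_eight
    (by rw [Finset.card_insert_of_notMem (Finset.mem_compl.1 hpT), hT]) ht
  have := h.pos
  lia

/- Each hexad through `T` meets the octad `O` in at most one further point. -/
theorem card_filter_not_isTetrad_le (h : IsPointedCode D L) (hT : #T = 3) (hO : O ∈ D)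
    (hOcard : #O = 8) (hTO : T ⊆ O) : #{p ∈ O \ T | ¬ IsTetrad D (insert p T)} ≤ L := by
  have hex (p) (hp : p ∈ ({p ∈ O \ T | ¬ IsTetrad D (insert p T)} : Finset α)) :
      ∃ c ∈ wordsThrough D 6 T, p ∈ c := by
    simp only [Finset.mem_filter, Finset.mem_sdiff] at hp
    by_contra! hnone
    refine hp.2 ⟨by rw [Finset.card_insert_of_notMem hp.1.2, hT], fun c hc hcard hsub => ?_⟩
    rw [Finset.insert_subset_iff] at hsub
    exact hnone c (mem_wordsThrough.2 ⟨hc, hcard, hsub.2⟩) hsub.1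
  choose! block hblock hmem using hex
  rw [← h.card_wordsThrough_six_of_card_eq_three hT]
  refine Finset.card_le_card_of_injOn block hblock fun p hp q hq heq => ?_
  obtain ⟨hc, hcard, hTc⟩ := mem_wordsThrough.1 (hblock p hp)
  have hpc := hmem p hp
  have hqc := heq ▸ hmem q hq
  simp only [Finset.coe_filter, Finset.mem_sdiff, Set.mem_ofPred_eq] at hp hq
  by_contra hne
  have hfive : #(insert p (insert q T)) = 5 := by
    rw [Finset.card_insert_of_notMem (by simp [hne, hp.1.2]), Finset.card_insert_of_notMem hq.1.2,
      hT]
  have : block p = O := h.eq_of_subset (x := insert p (insert q T)) hc hO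
    (Finset.insert_subset hpc (Finset.insert_subset hqc hTc))
    (Finset.insert_subset hp.1.1 (Finset.insert_subset hq.1.1 hTO)) (by lia)
  rw [this] at hcard
  lia

theorem card_wordsThrough_eight_of_isTetrad_of_eq_two (h : IsPointedCode D 2)
    (ht : IsTetrad D x) :
    #(wordsThrough D 8 x) = 0 ∨ #(wordsThrough D 8 x) = 3 ∧ #(nearPoints D x) = 12 := by
  have hcount := h.succ_mul_card_nearPoints ht.1
  rw [h.card_wordsThrough_six_eq_ite ht.1, if_neg (not_not.2 ht)] at hcount
  have := h.card_nearPoints_le ht.1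
  lia

theorem five_mul_card_wordsThrough_eight_of_eq_two (h : IsPointedCode D 2) (hT : #T = 3) :
    5 * #(wordsThrough D 8 T) = 12 +
      3 * #{p ∈ Tᶜ | IsTetrad D (insert p T) ∧ #(wordsThrough D 8 (insert p T)) ≠ 0} := by
  have hterm (p) (hp : p ∈ Tᶜ) : #(wordsThrough D 8 (insert p T)) =
      2 * (if ¬ IsTetrad D (insert p T) then 1 else 0) +
        3 * (if IsTetrad D (insert p T) ∧ #(wordsThrough D 8 (insert p T)) ≠ 0
          then 1 else 0) := by
    have hcard : #(insert p T) = 4 := by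
      rw [Finset.card_insert_of_notMem (Finset.mem_compl.1 hp), hT]
    by_cases ht : IsTetrad D (insert p T)
    · have := h.card_wordsThrough_eight_of_isTetrad_of_eq_two ht
      simp only [ht, not_true_eq_false, if_false, true_and]
      split_ifs <;> lia
    · have := h.two_mul_card_wordsThrough_eight hcard ht
      simp only [ht, not_false_eq_true, if_true, false_and, if_false]
      lia
  have hsum := sum_card_wordsThrough_insert D 8 T
  rw [Finset.sum_congr rfl hterm, Finset.sum_add_distrib, ← Finset.mul_sum, ← Finset.mul_sum,
    ← Finset.card_filter, ← Finset.card_filter, h.card_filter_not_isTetrad hT, hT] at hsum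
  lia

theorem card_filter_isTetrad_wordsThrough_eight_ne_zero (h : IsPointedCode D 2) (hT : #T = 3) :
    #{p ∈ Tᶜ | IsTetrad D (insert p T) ∧ #(wordsThrough D 8 (insert p T)) ≠ 0} = 6 := by
  have hcount := h.five_mul_card_wordsThrough_eight_of_eq_two hT
  have htetrads := h.card_filter_isTetrad hT
  have hle : #{p ∈ Tᶜ | IsTetrad D (insert p T) ∧ #(wordsThrough D 8 (insert p T)) ≠ 0} ≤
      #{p ∈ Tᶜ | IsTetrad D (insert p T)} :=
    Finset.card_le_card (Finset.monotone_filter_right _ fun _ _ hp => hp.1)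
  obtain ⟨O, hO⟩ : (wordsThrough D 8 T).Nonempty := Finset.card_pos.1 (by lia)
  obtain ⟨hOD, hOcard, hTO⟩ := mem_wordsThrough.1 hO
  have hfew := h.card_filter_not_isTetrad_le hT hOD hOcard hTO
  have hsplit : #{p ∈ O \ T | IsTetrad D (insert p T)} +
      #{p ∈ O \ T | ¬ IsTetrad D (insert p T)} = 5 := by
    rw [Finset.card_filter_add_card_filter_not, Finset.card_sdiff_of_subset hTO, hOcard, hT]
  have hge : #{p ∈ O \ T | IsTetrad D (insert p T)} ≤
      #{p ∈ Tᶜ | IsTetrad D (insert p T) ∧ #(wordsThrough D 8 (insert p T)) ≠ 0} := by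
    refine Finset.card_le_card fun p hp => ?_
    simp only [Finset.mem_filter, Finset.mem_sdiff] at hp
    refine Finset.mem_filter.2 ⟨Finset.mem_compl.2 hp.1.2, hp.2, Finset.card_ne_zero_of_mem
      (mem_wordsThrough.2 ⟨hOD, hOcard, Finset.insert_subset hp.1.1 hTO⟩)⟩
  lia

theorem existsUnique_wordsThrough_eight_eq_zero (h : IsPointedCode D 2) (hT : #T = 3) :
    ∃! p, p ∉ T ∧ #(wordsThrough D 8 (insert p T)) = 0 := by
  have hzero : ({p ∈ Tᶜ | #(wordsThrough D 8 (insert p T)) = 0} : Finset α) =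
      {p ∈ {p ∈ Tᶜ | IsTetrad D (insert p T)} | ¬ #(wordsThrough D 8 (insert p T)) ≠ 0} := by
    ext p
    simp only [Finset.mem_filter, Finset.mem_compl, not_not]
    refine ⟨fun ⟨hp, h0⟩ => ⟨⟨hp, ?_⟩, h0⟩, fun ⟨⟨hp, _⟩, h0⟩ => ⟨hp, h0⟩⟩
    by_contra ht
    have := h.two_mul_card_wordsThrough_eight
      (by rw [Finset.card_insert_of_notMem hp, hT]) ht
    lia
  have hcard : #{p ∈ Tᶜ | #(wordsThrough D 8 (insert p T)) = 0} = 1 := by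
    have hsplit := Finset.card_filter_add_card_filter_not (s := {p ∈ Tᶜ | IsTetrad D (insert p T)})
      fun p => #(wordsThrough D 8 (insert p T)) ≠ 0
    have htetrads := h.card_filter_isTetrad hT
    rw [Finset.filter_filter, h.card_filter_isTetrad_wordsThrough_eight_ne_zero hT] at hsplit
    rw [hzero]
    lia
  obtain ⟨p, hp⟩ := Finset.card_eq_one.1 hcard
  simp only [Finset.ext_iff, Finset.mem_filter, Finset.mem_compl, Finset.mem_singleton] at hp
  exact ⟨p, (hp p).2 rfl, fun q hq => (hp q).1 hq⟩

theorem card_wordsThrough_eight_eq_zero_of_notMem_nearPoints (h : IsPointedCode D 2)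
    (ht : IsTetrad D x) (hpx : p ∉ x) (hfar : p ∉ nearPoints D x) (hqx : q ∈ x) :
    #(wordsThrough D 8 (insert p (x.erase q))) = 0 := by
  set x' := insert p (x.erase q) with hx'
  have hpq : p ≠ q := fun he => hpx (he ▸ hqx)
  have hqx' : q ∉ x' := by simp [hx', hpq.symm]
  have hinsert : insert q x' = insert p x := by
    rw [hx', Finset.insert_comm, Finset.insert_erase hqx]
  have hcard : #x' = 4 := by
    rw [hx', Finset.card_insert_of_notMem (by simp [hpx]), Finset.card_erase_of_mem hqx, ht.1]
  have hfar' (c) (hc : c ∈ D) : #(insert q x' ∆ c) ≠ 3 := fun hdist =>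
    hfar (Finset.mem_filter.2 ⟨Finset.mem_compl.2 hpx, c, hc, hinsert ▸ hdist⟩)
  have ht' : IsTetrad D x' := by
    refine ⟨hcard, fun c hc hc6 hsub => hfar' c hc ?_⟩
    have hqc : q ∉ c := fun hqc => ht.2 c hc hc6 <|
      ((Finset.subset_insert p x).trans hinsert.ge).trans (Finset.insert_subset hqc hsub)
    have := card_symmDiff_add_two_mul_card_inter x' c
    rw [Finset.inter_eq_left.2 hsub] at this
    rw [card_insert_symmDiff_of_notMem hqx' hqc]
    lia
  have hle : #(nearPoints D x') ≤ #(insert q x')ᶜ := by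
    refine Finset.card_le_card fun r hr => ?_
    obtain ⟨hrx', c, hc, hdist⟩ := Finset.mem_filter.1 hr
    refine Finset.mem_compl.2 (Finset.mem_insert.not.2 (not_or.2 ⟨?_, Finset.mem_compl.1 hrx'⟩))
    rintro rfl
    exact hfar' c hc hdist
  rw [Finset.card_compl, h.card_univ, Finset.card_insert_of_notMem hqx', hcard] at hle
  have := h.card_wordsThrough_eight_of_isTetrad_of_eq_two ht'
  lia

theorem not_isPointedCode_two : ¬ IsPointedCode D 2 := by
  intro h
  obtain ⟨T, hT⟩ := h.exists_card_eq_three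
  obtain ⟨q, ⟨hqT, hq⟩, hunique⟩ := h.existsUnique_wordsThrough_eight_eq_zero hT
  have hx : #(insert q T) = 4 := by rw [Finset.card_insert_of_notMem hqT, hT]
  have hxt : IsTetrad D (insert q T) := by
    by_contra ht
    have := h.two_mul_card_wordsThrough_eight hx ht
    lia
  have hcount := h.succ_mul_card_nearPoints hx
  rw [hq, h.card_wordsThrough_six_eq_ite hx, if_neg (not_not.2 hxt)] at hcount
  obtain ⟨p, hpx, hfar⟩ : ∃ p ∈ (insert q T)ᶜ, p ∉ nearPoints D (insert q T) := by
    by_contra! hall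
    have := Finset.card_le_card (fun p hp => hall p hp : (insert q T)ᶜ ⊆ nearPoints D (insert q T))
    rw [Finset.card_compl, h.card_univ, hx] at this
    lia
  have hp := h.card_wordsThrough_eight_eq_zero_of_notMem_nearPoints hxt
    (Finset.mem_compl.1 hpx) hfar (Finset.mem_insert_self q T)
  rw [Finset.erase_insert hqT] at hp
  rw [Finset.mem_compl, Finset.mem_insert, not_or] at hpx
  exact hpx.1 (hunique p ⟨hpx.2, hp⟩)

theorem eq_four (h : IsPointedCode D L) : L = 4 :=
  h.eq_two_or_eq_four.resolve_left fun hL => not_isPointedCode_two (hL ▸ h)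

theorem card_wordsThrough_eight_of_isTetrad (h : IsPointedCode D 4) (ht : IsTetrad D x) :
    #(wordsThrough D 8 x) = 3 := by
  have hcount := h.succ_mul_card_nearPoints ht.1
  rw [h.card_wordsThrough_six_eq_ite ht.1, if_neg (not_not.2 ht)] at hcount
  have := h.card_nearPoints_le ht.1
  lia

theorem existsUnique_isTetrad (h : IsPointedCode D 4) (hT : #T = 3) :
    ∃! p, p ∉ T ∧ IsTetrad D (insert p T) := by
  have hcard := h.card_filter_isTetrad hT
  obtain ⟨p, hp⟩ := Finset.card_eq_one.1 (by lia : #{p ∈ Tᶜ | IsTetrad D (insert p T)} = 1)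
  simp only [Finset.ext_iff, Finset.mem_filter, Finset.mem_compl, Finset.mem_singleton] at hp
  exact ⟨p, (hp p).2 rfl, fun q hq => (hp q).1 hq⟩

end IsPointedCode

end Counting

section QuadrupleSystem

variable {α : Type*} [DecidableEq α]

theorem pairwise_ne_of_card_eq_four {a b c d : α} (h : #{a, b, c, d} = 4) :
    a ≠ b ∧ a ≠ c ∧ a ≠ d ∧ b ≠ c ∧ b ≠ d ∧ c ≠ d := by
  have hle (a b c : α) : #{a, b, c} ≠ 4 := (Finset.card_le_three.trans_lt (by norm_num)).ne
  refine ⟨?_, ?_, ?_, ?_, ?_, ?_⟩ <;> rintro rfl <;> simp [hle] at h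

theorem exists_eq_of_card_eq_four {s : Finset α} (hs : #s = 4) {a : α} (ha : a ∈ s) :
    ∃ b c d, s = {a, b, c, d} := by
  obtain ⟨b, c, d, -, -, -, heq⟩ := Finset.card_eq_three.1
    (by rw [Finset.card_erase_of_mem ha, hs] : #(s.erase a) = 3)
  exact ⟨b, c, d, by rw [← heq, Finset.insert_erase ha]⟩

/-- `𝒬` is a Steiner quadruple system: a family of 4-sets such that every three points lie in
exactly one of them. -/
structure IsQuadrupleSystem (𝒬 : Finset α → Prop) : Prop where
  card_eq_four : ∀ {x}, 𝒬 x → #x = 4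
  exists_fourth : ∀ {a b c : α}, a ≠ b → a ≠ c → b ≠ c → ∃ d, 𝒬 {a, b, c, d}
  fourth_unique : ∀ {a b c d e : α}, 𝒬 {a, b, c, d} → 𝒬 {a, b, c, e} → d = e

namespace IsQuadrupleSystem

variable {𝒬 𝒬' : Finset α → Prop}

theorem eq_of_le (h : IsQuadrupleSystem 𝒬) (h' : IsQuadrupleSystem 𝒬') (hle : 𝒬 ≤ 𝒬') :
    𝒬 = 𝒬' := by
  refine le_antisymm hle fun x hx => ?_
  obtain ⟨a, ha⟩ := Finset.card_pos.1 (by rw [h'.card_eq_four hx]; norm_num : 0 < #x)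
  obtain ⟨b, c, d, rfl⟩ := exists_eq_of_card_eq_four (h'.card_eq_four hx) ha
  obtain ⟨hab, hac, -, hbc, -, -⟩ := pairwise_ne_of_card_eq_four (h'.card_eq_four hx)
  obtain ⟨e, he⟩ := h.exists_fourth hab hac hbc
  rwa [h'.fourth_unique hx (hle _ he)]

/- The points of `O \ {a}` and of `Oᶜ \ {b}` would be matched by `z ↦ w` with
`𝒬 {a, b, z, w}`. -/
theorem card_inter_ne_one [Fintype α] (h : IsQuadrupleSystem 𝒬) {O x : Finset α}
    (hO : 2 * #O = Fintype.card α) (hthree : ∀ x, 𝒬 x → #(x ∩ O) ≠ 3) (hx : 𝒬 x) :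
    #(x ∩ O) ≠ 1 := by
  intro hone
  obtain ⟨a, ha⟩ := Finset.card_eq_one.1 hone
  have hmem (z) : z ∈ x → z ∈ O → z = a := by simpa using (Finset.ext_iff.1 ha z).1
  obtain ⟨hax, haO⟩ := Finset.mem_inter.1 (ha ▸ Finset.mem_singleton_self a)
  obtain ⟨b, c, d, rfl⟩ := exists_eq_of_card_eq_four (h.card_eq_four hx) hax
  obtain ⟨hab, hac, had, hbc, -, -⟩ := pairwise_ne_of_card_eq_four (h.card_eq_four hx)
  have hbO : b ∉ O := fun hb => hab (hmem b (by simp) hb).symm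
  have hcO : c ∉ O := fun hc => hac (hmem c (by simp) hc).symm
  have hdO : d ∉ O := fun hd => had (hmem d (by simp) hd).symm
  have hfourth (z) (hz : z ∈ O.erase a) : ∃ w, 𝒬 {a, b, z, w} := by
    obtain ⟨hza, hzO⟩ := Finset.mem_erase.1 hz
    exact h.exists_fourth hab hza.symm fun hbz => hbO (hbz ▸ hzO)
  choose! f hf using hfourth
  have hmaps : ∀ z ∈ O.erase a, f z ∈ Oᶜ.erase b := by
    intro z hz
    obtain ⟨-, haz, haw, -, hbw, hzw⟩ := pairwise_ne_of_card_eq_four (h.card_eq_four (hf z hz))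
    refine Finset.mem_erase.2 ⟨hbw.symm, Finset.mem_compl.2 fun hw => hthree _ (hf z hz) ?_⟩
    have hzO := Finset.mem_of_mem_erase hz
    rw [Finset.card_eq_three]
    exact ⟨a, z, f z, haz, haw, hzw, by grind⟩
  have hinj : Set.InjOn f (O.erase a) := fun z hz z' hz' heq => by
    have hz_tetrad := hf z hz
    have hz'_tetrad := hf z' hz'
    rw [Finset.pair_comm] at hz_tetrad hz'_tetrad
    exact h.fourth_unique hz_tetrad (heq ▸ hz'_tetrad)
  have hcard : #(Oᶜ.erase b) ≤ #(O.erase a) := by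
    rw [Finset.card_erase_of_mem haO, Finset.card_erase_of_mem (Finset.mem_compl.2 hbO),
      Finset.card_compl, ← hO]
    lia
  obtain ⟨z, hz, hzc⟩ := Finset.surjOn_of_injOn_of_card_le f hmaps hinj hcard
    (Finset.mem_coe.2 (Finset.mem_erase.2 ⟨hbc.symm, Finset.mem_compl.2 hcO⟩))
  have hz_tetrad := hf z hz
  rw [hzc, Finset.pair_comm] at hz_tetrad
  exact hdO (h.fourth_unique hz_tetrad hx ▸ Finset.mem_of_mem_erase hz)

end IsQuadrupleSystem

end QuadrupleSystem

section Separation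

variable {α : Type*} [Fintype α] [DecidableEq α] {D : Finset (Finset α)} {x O : Finset α} {p q : α}

namespace IsPointedCode

theorem isQuadrupleSystem (h : IsPointedCode D 4) : IsQuadrupleSystem (IsTetrad D) where
  card_eq_four ht := ht.1
  exists_fourth {a b c} hab hac hbc := by
    obtain ⟨d, hd, -⟩ :=
      h.existsUnique_isTetrad (Finset.card_eq_three.2 ⟨a, b, c, hab, hac, hbc, rfl⟩)
    exact ⟨d, by convert hd.2 using 1; grind⟩
  fourth_unique {a b c d e} hd he := by
    obtain ⟨hab, hac, had, hbc, hbd, hcd⟩ := pairwise_ne_of_card_eq_four hd.1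
    obtain ⟨-, -, hae, -, hbe, hce⟩ := pairwise_ne_of_card_eq_four he.1
    refine (h.existsUnique_isTetrad (Finset.card_eq_three.2 ⟨a, b, c, hab, hac, hbc, rfl⟩)).unique
      ⟨by grind, ?_⟩ ⟨by grind, ?_⟩
    · convert hd using 1; grind
    · convert he using 1; grind

theorem card_inter_octad_ne_three (h : IsPointedCode D 4) (hO : O ∈ D) (hcard : #O = 8)
    (ht : IsTetrad D x) : #(x ∩ O) ≠ 3 := by
  intro hthree
  obtain ⟨p, hp, hpt⟩ : ∃ p ∈ O \ (x ∩ O), IsTetrad D (insert p (x ∩ O)) := by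
    by_contra! hnone
    have hle := h.card_filter_not_isTetrad_le hthree hO hcard Finset.inter_subset_right
    rw [Finset.filter_true_of_mem hnone, Finset.card_sdiff_of_subset Finset.inter_subset_right,
      hcard, hthree] at hle
    lia
  obtain ⟨q, hq⟩ := Finset.card_eq_one.1
    (by have := Finset.card_sdiff_add_card_inter x O; have := ht.1; lia : #(x \ O) = 1)
  have hqx : q ∈ x \ O := hq ▸ Finset.mem_singleton_self q
  rw [Finset.mem_sdiff] at hp hqx
  have hx : insert q (x ∩ O) = x := by
    rw [← Finset.singleton_union, ← hq, Finset.sdiff_union_inter]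
  have heq := (h.existsUnique_isTetrad hthree).unique ⟨hp.2, hpt⟩
    ⟨fun hq' => hqx.2 (Finset.mem_inter.1 hq').2, hx.symm ▸ ht⟩
  exact hqx.2 (heq ▸ hp.1)

theorem even_card_inter_octad (h : IsPointedCode D 4) (hO : O ∈ D) (hcard : #O = 8)
    (ht : IsTetrad D x) : Even #(x ∩ O) := by
  have hthree := fun x => h.card_inter_octad_ne_three (x := x) hO hcard
  have hone := h.isQuadrupleSystem.card_inter_ne_one (by rw [hcard, h.card_univ]) hthree ht
  have hle : #(x ∩ O) ≤ 4 := ht.1 ▸ Finset.card_le_card Finset.inter_subset_left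
  have := hthree x ht
  rw [Nat.even_iff]
  lia

theorem mem_octad_of_isTetrad (h : IsPointedCode D 4) (hO : O ∈ D) (hcard : #O = 8)
    {a b c d : α} (ht : IsTetrad D {a, b, c, d}) (ha : a ∈ O) (hb : b ∈ O) (hc : c ∈ O) :
    d ∈ O := by
  by_contra hd
  obtain ⟨hab, hac, -, hbc, -, -⟩ := pairwise_ne_of_card_eq_four ht.1
  exact h.card_inter_octad_ne_three hO hcard ht
    (Finset.card_eq_three.2 ⟨a, b, c, hab, hac, hbc, by grind⟩)

/- Two octads through the tetrad `{a, b, c, d}` and `p` would also share the fourth point of the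
tetrad on `a`, `b`, `p`. -/
theorem card_wordsThrough_eight_insert_le_one (h : IsPointedCode D 4) (ht : IsTetrad D x)
    (hp : p ∉ x) : #(wordsThrough D 8 (insert p x)) ≤ 1 := by
  obtain ⟨a, ha⟩ := Finset.card_pos.1 (by rw [ht.1]; norm_num : 0 < #x)
  obtain ⟨b, c, d, rfl⟩ := exists_eq_of_card_eq_four ht.1 ha
  obtain ⟨hab, -, -, -, -, -⟩ := pairwise_ne_of_card_eq_four ht.1
  simp only [Finset.mem_insert, Finset.mem_singleton, not_or] at hp
  obtain ⟨hpa, hpb, hpc, hpd⟩ := hp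
  obtain ⟨w, hw⟩ := h.isQuadrupleSystem.exists_fourth hab (Ne.symm hpa) (Ne.symm hpb)
  obtain ⟨-, -, haw, -, hbw, hpw⟩ := pairwise_ne_of_card_eq_four hw.1
  have hwc : w ≠ c := by
    rintro rfl
    rw [Finset.pair_comm] at hw
    exact hpd (h.isQuadrupleSystem.fourth_unique hw ht)
  have hwd : w ≠ d := by
    rintro rfl
    rw [Finset.pair_comm] at hw ht
    exact hpc (h.isQuadrupleSystem.fourth_unique hw ht)
  have hsix : #(insert w (insert p {a, b, c, d})) = 6 := by
    rw [Finset.card_insert_of_notMem (by grind), Finset.card_insert_of_notMem (by grind), ht.1]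
  simp only [Finset.card_le_one, mem_wordsThrough, Finset.insert_subset_iff]
  rintro O ⟨hO, hcard, hpO, haO, hbO, hO4⟩ O' ⟨hO', hcard', hpO', haO', hbO', hO4'⟩
  refine h.eq_of_subset (x := insert w (insert p {a, b, c, d})) hO hO' ?_ ?_ (by lia)
  · have := h.mem_octad_of_isTetrad hO hcard hw haO hbO hpO
    simp only [Finset.insert_subset_iff]
    exact ⟨this, hpO, haO, hbO, hO4⟩
  · have := h.mem_octad_of_isTetrad hO' hcard' hw haO' hbO' hpO'
    simp only [Finset.insert_subset_iff]
    exact ⟨this, hpO', haO', hbO', hO4'⟩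

theorem exists_isTetrad_mem_notMem (h : IsPointedCode D 4) (hpq : p ≠ q) :
    ∃ x, IsTetrad D x ∧ p ∈ x ∧ q ∉ x := by
  have hfresh (s : Finset α) (hs : #s ≤ 4) : ∃ v, v ∉ s := by
    by_contra! hall
    have := Finset.eq_univ_iff_forall.2 hall ▸ hs
    rw [Finset.card_univ, h.card_univ] at this
    lia
  obtain ⟨u, hu⟩ := hfresh {p, q} (Finset.card_le_two.trans (by norm_num))
  simp only [Finset.mem_insert, Finset.mem_singleton, not_or] at hu
  obtain ⟨w, hw⟩ := h.isQuadrupleSystem.exists_fourth (Ne.symm hu.1) hpq hu.2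
  obtain ⟨v, hv⟩ := hfresh {p, u, q, w} hw.1.le
  simp only [Finset.mem_insert, Finset.mem_singleton, not_or] at hv
  obtain ⟨r, hr⟩ := h.isQuadrupleSystem.exists_fourth (Ne.symm hu.1) (Ne.symm hv.1) (Ne.symm hv.2.1)
  refine ⟨_, hr, by simp, fun hq => ?_⟩
  simp only [Finset.mem_insert, Finset.mem_singleton] at hq
  obtain rfl : q = r := by grind
  rw [Finset.pair_comm] at hr
  exact hv.2.2.2 (h.isQuadrupleSystem.fourth_unique hr hw)

theorem exists_octad_mem_notMem (h : IsPointedCode D 4) (hpq : p ≠ q) :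
    ∃ O ∈ D, #O = 8 ∧ p ∈ O ∧ q ∉ O := by
  obtain ⟨x, ht, hpx, hqx⟩ := h.exists_isTetrad_mem_notMem hpq
  by_contra! hall
  have hsub : wordsThrough D 8 x ⊆ wordsThrough D 8 (insert q x) := fun O hO => by
    obtain ⟨hOD, hcard, hxO⟩ := mem_wordsThrough.1 hO
    exact mem_wordsThrough.2
      ⟨hOD, hcard, Finset.insert_subset (hall O hOD hcard (hxO hpx)) hxO⟩
  have := Finset.card_le_card hsub
  rw [h.card_wordsThrough_eight_of_isTetrad ht] at this
  have := h.card_wordsThrough_eight_insert_le_one ht hqx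
  lia

end IsPointedCode

end Separation

section Coordinates

/-- The vector space of dimension 4 over the field with two elements. -/
abbrev V : Type := Fin 4 → ZMod 2

/-- The hexad formed by the zero vector, the four unit vectors and the all-ones vector. -/
def stdHexad : Finset V :=
  insert 1 (insert 0 (Finset.univ.image fun i => Pi.single i 1))

theorem eq_one_of_ne_sum {w : V} (hzero : w ≠ 0) (hone : ∀ i, w ≠ Pi.single i 1)
    (htwo : ∀ i j, i ≠ j → w ≠ Pi.single i 1 + Pi.single j 1)
    (hthree : ∀ i j k, i ≠ j → i ≠ k → j ≠ k →
      w ≠ Pi.single i 1 + Pi.single j 1 + Pi.single k 1) : w = 1 := by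
  decide +revert +kernel

variable {α M : Type*} [AddCommGroup M] [Module (ZMod 2) M] {f : α → M} {a : α} {b : Fin 4 ↪ α}

theorem sum_add_const_of_even (f : α → M) (a : α) {x : Finset α} (hx : Even #x) :
    ∑ p ∈ x, (f p + f a) = ∑ p ∈ x, f p := by
  obtain ⟨n, hn⟩ := hx
  rw [Finset.sum_add_distrib, Finset.sum_const, hn, add_smul, ZModModule.add_self, add_zero]

theorem exists_linearCombination_eq (hflat : ∀ p q r, ∃ s, f s = f p + f q + f r) (v : V) :
    ∃ p, f p + f a = Fintype.linearCombination (ZMod 2) (fun i => f (b i) + f a) v := by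
  rw [Fintype.linearCombination_apply]
  induction (Finset.univ : Finset (Fin 4)) using Finset.induction_on with
  | empty => exact ⟨a, by rw [Finset.sum_empty, ZModModule.add_self]⟩
  | insert i s hi ih =>
    obtain ⟨p, hp⟩ := ih
    obtain hv | hv : v i = 0 ∨ v i = 1 := by generalize v i = z; decide +revert
    · exact ⟨p, by rw [Finset.sum_insert hi, hv, zero_smul, zero_add, hp]⟩
    · obtain ⟨q, hq⟩ := hflat (b i) p a
      refine ⟨q, ?_⟩
      rw [Finset.sum_insert hi, hv, one_smul, ← hp, hq]
      abel

variable [DecidableEq α]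

theorem linearCombination_injective (ha : a ∉ Finset.univ.map b)
    (hindep : ∀ x ⊆ insert a (Finset.univ.map b), Even #x → ∑ p ∈ x, f p = 0 → x = ∅) :
    Function.Injective (Fintype.linearCombination (ZMod 2) fun i => f (b i) + f a) := by
  rw [injective_iff_map_eq_zero]
  intro v hv
  set s : Finset α := ({i | v i ≠ 0} : Finset (Fin 4)).map b with hs
  have hs_sub : s ⊆ Finset.univ.map b := Finset.map_subset_map.2 (Finset.subset_univ _)
  have hsum : ∑ p ∈ s, (f p + f a) = 0 := by
    rw [← hv, Fintype.linearCombination_apply, hs, Finset.sum_map, Finset.sum_filter]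
    refine Finset.sum_congr rfl fun i _ => ?_
    obtain hi | hi : v i = 0 ∨ v i = 1 := by generalize v i = z; decide +revert
    all_goals simp [hi]
  have hs_empty : s = ∅ := by
    by_cases hev : Even #s
    · exact hindep s (hs_sub.trans (Finset.subset_insert _ _)) hev
        (by rwa [sum_add_const_of_even f a hev] at hsum)
    · have has : a ∉ s := fun h => ha (hs_sub h)
      have hcard : Even #(insert a s) := by
        rw [Finset.card_insert_of_notMem has]
        exact (Nat.not_even_iff_odd.1 hev).add_one
      have := hindep _ (Finset.insert_subset_insert a hs_sub) hcard
        (by rw [← sum_add_const_of_even f a hcard, Finset.sum_insert has, hsum,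
          ZModModule.add_self, add_zero])
      exact absurd this (Finset.insert_ne_empty _ _)
  rw [hs, Finset.map_eq_empty, Finset.filter_eq_empty_iff] at hs_empty
  exact funext fun i => not_not.1 (hs_empty (Finset.mem_univ i))

theorem exists_embedding_eq_insert {B : Finset α} (hB : #B = 6) {a b c : α} (ha : a ∈ B)
    (hb : b ∈ B) (hc : c ∈ B) (hab : a ≠ b) (hac : a ≠ c) (hbc : b ≠ c) :
    ∃ (e : Fin 4 ↪ α) (g : α), e 0 = b ∧ e 1 = c ∧ a ∉ Finset.univ.map e ∧
      g ∉ insert a (Finset.univ.map e) ∧ B = insert g (insert a (Finset.univ.map e)) := by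
  have hcard : #(((B.erase a).erase b).erase c) = 3 := by
    rw [Finset.card_erase_of_mem (by grind), Finset.card_erase_of_mem (by grind),
      Finset.card_erase_of_mem ha, hB]
  obtain ⟨d, e, g, hde, hdg, heg, heq⟩ := Finset.card_eq_three.1 hcard
  simp only [Finset.ext_iff, Finset.mem_erase, Finset.mem_insert, Finset.mem_singleton] at heq
  have hinj : Function.Injective ![b, c, d, e] := by
    intro i j
    fin_cases i <;> fin_cases j <;> simp <;> grind
  have hmap : Finset.univ.map ⟨_, hinj⟩ = {b, c, d, e} := by
    ext p
    simp [Fin.exists_fin_succ, eq_comm]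
  refine ⟨⟨_, hinj⟩, g, rfl, rfl, ?_, ?_, ?_⟩ <;> rw [hmap]
  · grind
  · grind
  · ext p
    grind

theorem apply_eq_one_of_forall_ne_sum {σ : α ≃ V} {g : α} (ha : a ∉ Finset.univ.map b)
    (hg : g ∉ insert a (Finset.univ.map b)) (hσa : σ a = 0) (hσb : ∀ i, σ (b i) = Pi.single i 1)
    (hsum : ∀ x ⊆ insert a (Finset.univ.map b), #x = 3 → σ g ≠ ∑ p ∈ x, σ p) : σ g = 1 := by
  have hne {p} (hp : p ∈ insert a (Finset.univ.map b)) : σ g ≠ σ p :=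
    σ.injective.ne fun he => hg (he ▸ hp)
  have hb_mem (i) : b i ∈ insert a (Finset.univ.map b) := by simp
  have ha_ne (i) : a ≠ b i := fun he => ha (he ▸ by simp)
  have hthree {p q r} (hp : p ∈ insert a (Finset.univ.map b))
      (hq : q ∈ insert a (Finset.univ.map b)) (hr : r ∈ insert a (Finset.univ.map b))
      (hpq : p ≠ q) (hpr : p ≠ r) (hqr : q ≠ r) : σ g ≠ σ p + σ q + σ r := by
    have hne_sum := hsum {p, q, r}
      (Finset.insert_subset hp (Finset.insert_subset hq (Finset.singleton_subset_iff.2 hr)))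
      (Finset.card_eq_three.2 ⟨p, q, r, hpq, hpr, hqr, rfl⟩)
    rwa [Finset.sum_insert (by simp [hpq, hpr]), Finset.sum_pair hqr, ← add_assoc] at hne_sum
  have ha_mem := Finset.mem_insert_self a (Finset.univ.map b)
  refine eq_one_of_ne_sum ?_ (fun i => ?_) (fun i j hij => ?_) fun i j k hij hik hjk => ?_
  · exact hσa ▸ hne ha_mem
  · exact hσb i ▸ hne (hb_mem i)
  · rw [← hσb, ← hσb, ← zero_add (σ (b i)), ← hσa]
    exact hthree ha_mem (hb_mem i) (hb_mem j) (ha_ne i) (ha_ne j) (b.injective.ne hij)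
  · rw [← hσb, ← hσb, ← hσb]
    exact hthree (hb_mem i) (hb_mem j) (hb_mem k) (b.injective.ne hij) (b.injective.ne hik)
      (b.injective.ne hjk)

variable [Fintype α]

theorem exists_equiv_of_affineIndependent (hcard : Fintype.card α = 16)
    (hflat : ∀ p q r, ∃ s, f s = f p + f q + f r) (ha : a ∉ Finset.univ.map b)
    (hindep : ∀ x ⊆ insert a (Finset.univ.map b), Even #x → ∑ p ∈ x, f p = 0 → x = ∅) :
    ∃ σ : α ≃ V, σ a = 0 ∧ (∀ i, σ (b i) = Pi.single i 1) ∧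
      ∀ x : Finset α, Even #x → (∑ p ∈ x, σ p = 0 ↔ ∑ p ∈ x, f p = 0) := by
  set ψ := Fintype.linearCombination (ZMod 2) fun i => f (b i) + f a with hψ
  have hinj : Function.Injective ψ := linearCombination_injective ha hindep
  choose τ hτ using exists_linearCombination_eq (a := a) (b := b) hflat
  have hτ_inj : Function.Injective τ := fun v w hvw => hinj (by rw [hψ, ← hτ v, ← hτ w, hvw])
  have hτ_bij : Function.Bijective τ :=
    (Fintype.bijective_iff_injective_and_card τ).2 ⟨hτ_inj, by simp [hcard, ZMod.card]⟩
  set σ : α ≃ V := (Equiv.ofBijective τ hτ_bij).symm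
  have hσ (p : α) : ψ (σ p) = f p + f a := by
    rw [hψ, ← hτ (σ p)]
    exact congrArg (f · + f a) ((Equiv.ofBijective τ hτ_bij).apply_symm_apply p)
  refine ⟨σ, hinj ?_, fun i => hinj ?_, fun x hx => ?_⟩
  · rw [hσ, map_zero, ZModModule.add_self]
  · rw [hσ, hψ, Fintype.linearCombination_apply_single, one_smul]
  · rw [← map_eq_zero_iff ψ hinj, map_sum, ← sum_add_const_of_even f a hx]
    simp only [hσ]

omit [DecidableEq α] in
theorem exists_equiv_map_eq_stdHexad (hcard : Fintype.card α = 16)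
    (hflat : ∀ p q r, ∃ s, f s = f p + f q + f r) {B : Finset α} (hB : #B = 6)
    (hindep : ∀ x ⊆ B, Even #x → #x ≤ 4 → ∑ p ∈ x, f p = 0 → x = ∅) {a b c : α}
    (ha : a ∈ B) (hb : b ∈ B) (hc : c ∈ B) (hab : a ≠ b) (hac : a ≠ c) (hbc : b ≠ c) :
    ∃ σ : α ≃ V, σ a = 0 ∧ σ b = Pi.single 0 1 ∧ σ c = Pi.single 1 1 ∧
      B.map σ.toEmbedding = stdHexad ∧
      ∀ x : Finset α, Even #x → (∑ p ∈ x, σ p = 0 ↔ ∑ p ∈ x, f p = 0) := by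
  classical
  obtain ⟨e, g, rfl, rfl, hae, hge, rfl⟩ := exists_embedding_eq_insert hB ha hb hc hab hac hbc
  obtain ⟨σ, hσa, hσe, hσ⟩ := exists_equiv_of_affineIndependent hcard hflat hae fun x hx hev =>
    hindep x (hx.trans (Finset.subset_insert _ _)) hev <| by
      have := Finset.card_le_card hx
      rw [Finset.card_insert_of_notMem hge] at hB
      obtain ⟨n, hn⟩ := hev
      lia
  have hg : σ g = 1 := apply_eq_one_of_forall_ne_sum hae hge hσa hσe fun x hx hthree heq => by
    have hgx : g ∉ x := fun hmem => hge (hx hmem)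
    have hfour : #(insert g x) = 4 := by rw [Finset.card_insert_of_notMem hgx, hthree]
    refine Finset.insert_ne_empty g x (hindep _ (Finset.insert_subset_insert g hx)
      (by rw [hfour]; decide) hfour.le ((hσ _ (by rw [hfour]; decide)).1 ?_))
    rw [Finset.sum_insert hgx, heq, ZModModule.add_self]
  refine ⟨σ, hσa, hσe 0, hσe 1, ?_, hσ⟩
  rw [Finset.map_insert, Finset.map_insert, Finset.map_map, Finset.map_eq_image]
  simp only [Equiv.coe_toEmbedding, hg, hσa, stdHexad]
  congr 3
  exact funext hσe

end Coordinates

section OctadIncidence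

variable {α : Type*} [DecidableEq α]

/-- The incidence vector of a point with the octads, that is, the codewords of weight 8. -/
def octadIncidence (D : Finset (Finset α)) (p : α) : Finset α → ZMod 2 :=
  fun O => if O ∈ D ∧ #O = 8 ∧ p ∈ O then 1 else 0

variable [Fintype α] {D : Finset (Finset α)} {x : Finset α}

namespace IsPointedCode

theorem octadIncidence_injective (h : IsPointedCode D 4) :
    Function.Injective (octadIncidence D) := by
  intro p q heq
  by_contra hne
  obtain ⟨O, hO, hcard, hp, hq⟩ := h.exists_octad_mem_notMem hne
  simpa [octadIncidence, hO, hcard, hp, hq] using congrFun heq O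

theorem sum_octadIncidence_of_isTetrad (h : IsPointedCode D 4) (ht : IsTetrad D x) :
    ∑ p ∈ x, octadIncidence D p = 0 := by
  ext O
  rw [Finset.sum_apply, Pi.zero_apply]
  by_cases hO : O ∈ D ∧ #O = 8
  · have hcard : ∑ p ∈ x, octadIncidence D p O = (#(x ∩ O) : ZMod 2) := by
      simp only [octadIncidence, hO, true_and, Finset.sum_boole, Finset.filter_mem_eq_inter]
    rw [hcard, ZMod.natCast_eq_zero_iff_even]
    exact h.even_card_inter_octad hO.1 hO.2 ht
  · exact Finset.sum_eq_zero fun p _ => if_neg fun hp => hO ⟨hp.1, hp.2.1⟩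

theorem exists_octadIncidence_eq_add (h : IsPointedCode D 4) (p q r : α) :
    ∃ s, octadIncidence D s = octadIncidence D p + octadIncidence D q + octadIncidence D r := by
  by_cases hpq : p = q
  · exact ⟨r, by rw [hpq, ZModModule.add_self, zero_add]⟩
  by_cases hpr : p = r
  · exact ⟨q, by rw [hpr, add_right_comm, ZModModule.add_self, zero_add]⟩
  by_cases hqr : q = r
  · exact ⟨p, by rw [hqr, add_assoc, ZModModule.add_self, add_zero]⟩
  obtain ⟨s, hs⟩ := h.isQuadrupleSystem.exists_fourth hpq hpr hqr
  obtain ⟨-, -, hps, -, hqs, hrs⟩ := pairwise_ne_of_card_eq_four hs.1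
  have hsum := h.sum_octadIncidence_of_isTetrad hs
  rw [Finset.sum_insert (by simp [*]), Finset.sum_insert (by simp [*]), Finset.sum_pair hrs,
    ← add_assoc, ← add_assoc, add_eq_zero_iff_eq_neg, ZModModule.neg_eq_self] at hsum
  exact ⟨s, hsum.symm⟩

theorem isTetrad_iff_sum_octadIncidence_eq_zero (h : IsPointedCode D 4) (hx : #x = 4) :
    IsTetrad D x ↔ ∑ p ∈ x, octadIncidence D p = 0 := by
  refine ⟨h.sum_octadIncidence_of_isTetrad, fun hsum => ?_⟩
  obtain ⟨d, T, hdT, rfl, hT⟩ := Finset.card_eq_succ.1 hx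
  obtain ⟨e, ⟨he, ht⟩, -⟩ := h.existsUnique_isTetrad hT
  have hsum_e := h.sum_octadIncidence_of_isTetrad ht
  rw [Finset.sum_insert hdT] at hsum
  rw [Finset.sum_insert he] at hsum_e
  rwa [h.octadIncidence_injective (add_right_cancel (hsum.trans hsum_e.symm))]

end IsPointedCode

end OctadIncidence

section Isometries

variable {α β : Type*} {D : Finset (Finset α)} {L : ℕ} {x B : Finset α} {σ : α ≃ β}

/-- The family `D` with the points renamed along `σ`. -/
def relabel (σ : α ≃ β) (D : Finset (Finset α)) : Finset (Finset β) :=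
  D.map σ.finsetCongr.toEmbedding

theorem map_mem_relabel : x.map σ.toEmbedding ∈ relabel σ D ↔ x ∈ D :=
  Finset.mem_map' σ.finsetCongr.toEmbedding

theorem isTetrad_relabel : IsTetrad (relabel σ D) (x.map σ.toEmbedding) ↔ IsTetrad D x := by
  simp only [IsTetrad, relabel, Finset.forall_mem_map, Equiv.coe_toEmbedding,
    Equiv.finsetCongr_apply, Finset.card_map, Finset.map_subset_map]

variable [DecidableEq α] [DecidableEq β]

/-- The translate of `D` by the vector `B`. -/
def translate (B : Finset α) (D : Finset (Finset α)) : Finset (Finset α) :=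
  D.map (symmDiff_left_involutive B).toPerm.toEmbedding

theorem mem_translate : x ∈ translate B D ↔ x ∆ B ∈ D := by
  constructor
  · intro hx
    obtain ⟨c, hc, rfl⟩ := Finset.mem_map.1 hx
    simpa using hc
  · exact fun hx => Finset.mem_map.2 ⟨x ∆ B, hx, symmDiff_symmDiff_cancel_right _ _⟩

variable [Fintype α]

theorem IsPointedCode.map_equiv [Fintype β] (h : IsPointedCode D L)
    (hcard : Fintype.card β = 16) (g : Finset α ≃ Finset β)
    (hg : ∀ s t, #(g s ∆ g t) = #(s ∆ t)) (hempty : ∅ ∈ D.map g.toEmbedding) :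
    IsPointedCode (D.map g.toEmbedding) L where
  card_univ := hcard
  empty_mem := hempty
  six_le_card_symmDiff := by
    simp only [Finset.forall_mem_map, Equiv.coe_toEmbedding, hg, ne_eq, g.apply_eq_iff_eq]
    exact h.six_le_card_symmDiff
  card_at_three y := by
    obtain ⟨x, rfl⟩ := g.surjective y
    rintro ⟨c', hc', hthree⟩
    obtain ⟨c, hc, rfl⟩ := Finset.mem_map.1 hc'
    rw [Finset.filter_map, Finset.card_map]
    simp only [Function.comp_def, Equiv.coe_toEmbedding, hg] at hthree ⊢
    exact h.card_at_three x ⟨c, hc, hthree⟩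
  pos := h.pos

theorem isPointedCode_relabel [Fintype β] (h : IsPointedCode D L) (σ : α ≃ β) :
    IsPointedCode (relabel σ D) L :=
  h.map_equiv (by rw [← Fintype.card_congr σ, h.card_univ]) σ.finsetCongr
    (fun s t => by
      simp only [Equiv.finsetCongr_apply, Finset.map_eq_image, Equiv.coe_toEmbedding]
      rw [← Finset.image_symmDiff _ _ σ.injective]
      exact Finset.card_image_of_injective _ σ.injective)
    (map_mem_relabel (x := ∅).2 h.empty_mem)

theorem isPointedCode_translate (h : IsPointedCode D L) (hB : B ∈ D) :
    IsPointedCode (translate B D) L :=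
  h.map_equiv h.card_univ _
    (fun s t => congrArg Finset.card (by
      simp only [Function.Involutive.coe_toPerm]
      rw [symmDiff_symmDiff_symmDiff_comm, symmDiff_self, symmDiff_bot]))
    (mem_translate.2 (by rwa [← Finset.bot_eq_empty, bot_symmDiff]))

end Isometries

section AffinePlanes

/-- An affine plane of `V`: over the field with two elements these are the 4-sets of sum zero. -/
def IsPlane (x : Finset V) : Prop :=
  #x = 4 ∧ ∑ v ∈ x, v = 0

instance : DecidablePred IsPlane :=
  fun _ => inferInstanceAs (Decidable (_ ∧ _))

/-- A pointed code on the points of `V` whose tetrads are the affine planes. -/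
structure IsAffineCode (D : Finset (Finset V)) : Prop extends IsPointedCode D 4 where
  isTetrad_iff : ∀ x, IsTetrad D x ↔ IsPlane x

theorem eq_empty_of_even_of_sum_eq_zero {α M : Type*} [AddCommGroup M] [Module (ZMod 2) M]
    {f : α → M} (hf : Function.Injective f) {B x : Finset α}
    (hfour : ∀ x ⊆ B, #x = 4 → ∑ p ∈ x, f p ≠ 0) (hx : x ⊆ B) (hev : Even #x) (hle : #x ≤ 4)
    (hsum : ∑ p ∈ x, f p = 0) : x = ∅ := by
  obtain hx0 | hx2 | hx4 : #x = 0 ∨ #x = 2 ∨ #x = 4 := by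
    obtain ⟨n, hn⟩ := hev
    lia
  · exact Finset.card_eq_zero.1 hx0
  · classical
    obtain ⟨p, q, hpq, rfl⟩ := Finset.card_eq_two.1 hx2
    rw [Finset.sum_pair hpq, add_eq_zero_iff_eq_neg, ZModModule.neg_eq_self] at hsum
    exact absurd (hf hsum) hpq
  · exact absurd hsum (hfour x hx hx4)

theorem IsPointedCode.exists_isAffineCode_relabel {α : Type*} [Fintype α] [DecidableEq α]
    {D : Finset (Finset α)} (h : IsPointedCode D 4) {a b c : α} (hab : a ≠ b) (hac : a ≠ c)
    (hbc : b ≠ c) :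
    ∃ σ : α ≃ V, σ a = 0 ∧ σ b = Pi.single 0 1 ∧ σ c = Pi.single 1 1 ∧
      stdHexad ∈ relabel σ D ∧ IsAffineCode (relabel σ D) := by
  obtain ⟨B, hB, hcard, hsub⟩ :=
    h.exists_hexad_of_card_eq_three (Finset.card_eq_three.2 ⟨a, b, c, hab, hac, hbc, rfl⟩)
  simp only [Finset.insert_subset_iff, Finset.singleton_subset_iff] at hsub
  obtain ⟨σ, hσa, hσb, hσc, hσB, hσ⟩ := exists_equiv_map_eq_stdHexad h.card_univ
    h.exists_octadIncidence_eq_add hcard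
    (fun _ => eq_empty_of_even_of_sum_eq_zero h.octadIncidence_injective fun x hx hfour hsum =>
      ((h.isTetrad_iff_sum_octadIncidence_eq_zero hfour).2 hsum).2 B hB hcard hx)
    hsub.1 hsub.2.1 hsub.2.2 hab hac hbc
  refine ⟨σ, hσa, hσb, hσc, hσB ▸ map_mem_relabel.2 hB, isPointedCode_relabel h σ, fun y => ?_⟩
  obtain ⟨x, rfl⟩ := σ.finsetCongr.surjective y
  rw [Equiv.finsetCongr_apply, isTetrad_relabel, IsPlane, Finset.card_map, Finset.sum_map]
  by_cases hx : #x = 4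
  · rw [h.isTetrad_iff_sum_octadIncidence_eq_zero hx, ← hσ x (by rw [hx]; decide)]
    exact (and_iff_right hx).symm
  · exact ⟨fun ht => absurd ht.1 hx, fun ht => absurd ht.1 hx⟩

theorem isPlane_iff {a b c d : V} (hab : a ≠ b) (hac : a ≠ c) (hbc : b ≠ c) :
    IsPlane {a, b, c, d} ↔ d = a + b + c := by
  have hadd {u v : V} : u + v = 0 ↔ u = v := by
    rw [add_eq_zero_iff_eq_neg, ZModModule.neg_eq_self]
  constructor
  · rintro ⟨hcard, hsum⟩
    obtain ⟨-, -, had, -, hbd, hcd⟩ := pairwise_ne_of_card_eq_four hcard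
    rw [Finset.sum_insert (by simp [*]), Finset.sum_insert (by simp [*]), Finset.sum_pair hcd,
      ← add_assoc, ← add_assoc, hadd] at hsum
    exact hsum.symm
  · rintro rfl
    have ha : a ∉ ({b, c, a + b + c} : Finset V) := by
      simp [hab, hac, add_assoc, hadd, hbc]
    have hb : b ∉ ({c, a + b + c} : Finset V) := by
      simp [hbc, add_right_comm a b c, hadd, hac]
    have hc : c ≠ a + b + c := by simp [hadd, hab]
    refine ⟨?_, ?_⟩
    · rw [Finset.card_insert_of_notMem ha, Finset.card_insert_of_notMem hb, Finset.card_pair hc]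
    · rw [Finset.sum_insert ha, Finset.sum_insert hb, Finset.sum_pair hc, ← add_assoc, ← add_assoc,
        ZModModule.add_self]

theorem isQuadrupleSystem_isPlane : IsQuadrupleSystem IsPlane where
  card_eq_four hx := hx.1
  exists_fourth {a b c} hab hac hbc := ⟨a + b + c, (isPlane_iff hab hac hbc).2 rfl⟩
  fourth_unique {a b c d e} hd he := by
    obtain ⟨hab, hac, -, hbc, -, -⟩ := pairwise_ne_of_card_eq_four hd.1
    rw [isPlane_iff hab hac hbc] at hd he
    rw [hd, he]

end AffinePlanes

section Complements

variable {α : Type*} [Fintype α] [DecidableEq α] {D : Finset (Finset α)} {x : Finset α} {p : α}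

namespace IsPointedCode

theorem exists_octad_of_notMem_isTetrad (h : IsPointedCode D 4) (ht : IsTetrad D x) (hp : p ∉ x) :
    ∃ O ∈ D, #O = 8 ∧ insert p x ⊆ O := by
  have hle (q) (hq : q ∈ xᶜ) : #(wordsThrough D 8 (insert q x)) ≤ 1 :=
    h.card_wordsThrough_eight_insert_le_one ht (Finset.mem_compl.1 hq)
  have hsum : ∑ q ∈ xᶜ, #(wordsThrough D 8 (insert q x)) = ∑ q ∈ xᶜ, 1 := by
    rw [sum_card_wordsThrough_insert, h.card_wordsThrough_eight_of_isTetrad ht, ht.1,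
      Finset.sum_const, Finset.card_compl, ht.1, h.card_univ]
    rfl
  have hone := (Finset.sum_eq_sum_iff_of_le hle).1 hsum p (Finset.mem_compl.2 hp)
  obtain ⟨O, hO⟩ := Finset.card_pos.1 (hone ▸ one_pos)
  exact ⟨O, mem_wordsThrough.1 hO⟩

theorem exists_hexad_of_five_le_card (h : IsPointedCode D 4) (hx : 5 ≤ #x) :
    ∃ B ∈ D, #B = 6 ∧ 4 ≤ #(B ∩ x) := by
  obtain ⟨T, hTx, hT⟩ := Finset.exists_subset_card_eq ((by norm_num : 3 ≤ 5).trans hx)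
  obtain ⟨p, hp, q, hq, hpq⟩ : ∃ p ∈ x \ T, ∃ q ∈ x \ T, p ≠ q := by
    rw [← Finset.one_lt_card, Finset.card_sdiff_of_subset hTx]
    lia
  rw [Finset.mem_sdiff] at hp hq
  obtain ⟨r, hr, hrt⟩ : ∃ r ∈ x \ T, ¬ IsTetrad D (insert r T) := by
    by_contra! hall
    exact hpq ((h.existsUnique_isTetrad hT).unique ⟨hp.2, hall p (Finset.mem_sdiff.2 hp)⟩
      ⟨hq.2, hall q (Finset.mem_sdiff.2 hq)⟩)
  rw [Finset.mem_sdiff] at hr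
  have hcard : #(insert r T) = 4 := by rw [Finset.card_insert_of_notMem hr.2, hT]
  simp only [IsTetrad, hcard, true_and, not_forall, not_not] at hrt
  obtain ⟨B, hB, hB6, hsub⟩ := hrt
  exact ⟨B, hB, hB6, hcard ▸ Finset.card_le_card
    (Finset.subset_inter hsub (Finset.insert_subset hr.1 hTx))⟩

theorem card_ne_seven (h : IsPointedCode D 4) (hx : x ∈ D) : #x ≠ 7 := by
  intro hseven
  obtain ⟨B, hB, hB6, hinter⟩ := h.exists_hexad_of_five_le_card (x := x) (by lia)
  have := h.eq_of_card_lt hB hx (by lia)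
  rw [this] at hB6
  lia

end IsPointedCode

end Complements

section Flats

variable {Z P : Finset V} {a y : V}

/-- An affine subspace of `V`: over the field with two elements these are the sets closed under
sums of three elements. -/
def IsFlat (Z : Finset V) : Prop :=
  ∀ p ∈ Z, ∀ q ∈ Z, ∀ r ∈ Z, p + q + r ∈ Z

theorem isFlat_of_pairwise_ne
    (h : ∀ p ∈ Z, ∀ q ∈ Z, ∀ r ∈ Z, p ≠ q → p ≠ r → q ≠ r → p + q + r ∈ Z) : IsFlat Z := by
  intro p hp q hq r hr
  by_cases hpq : p = q
  · rwa [hpq, ZModModule.add_self, zero_add]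
  by_cases hpr : p = r
  · rwa [hpr, add_right_comm, ZModModule.add_self, zero_add]
  by_cases hqr : q = r
  · rwa [hqr, add_assoc, ZModModule.add_self, add_zero]
  exact h p hp q hq r hr hpq hpr hqr

theorem isFlat_of_even_card_inter (h : ∀ x, IsPlane x → Even #(x ∩ Z)) : IsFlat Z := by
  refine isFlat_of_pairwise_ne fun p hp q hq r hr hpq hpr hqr => ?_
  by_contra hs
  have heven := h _ ((isPlane_iff hpq hpr hqr).2 rfl)
  have hthree : ({p, q, r, p + q + r} ∩ Z : Finset V) = {p, q, r} := by grind
  rw [hthree, Finset.card_eq_three.2 ⟨p, q, r, hpq, hpr, hqr, rfl⟩] at heven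
  exact absurd heven (by decide)

theorem IsPlane.isFlat (hP : IsPlane P) : IsFlat P := by
  refine isFlat_of_pairwise_ne fun p hp q hq r hr hpq hpr hqr => ?_
  obtain ⟨b, c, d, rfl⟩ := exists_eq_of_card_eq_four hP.1 hp
  obtain ⟨s, hs⟩ : ∃ s, ({p, b, c, d} : Finset V) \ {p, q, r} = {s} := by
    rw [← Finset.card_eq_one, Finset.card_sdiff_of_subset (by grind), hP.1,
      Finset.card_eq_three.2 ⟨p, q, r, hpq, hpr, hqr, rfl⟩]
  have hsP : ({p, b, c, d} : Finset V) = {p, q, r, s} := by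
    rw [Finset.ext_iff] at hs ⊢
    grind
  rw [hsP] at hP ⊢
  simp [← (isPlane_iff hpq hpr hqr).1 hP]

theorem IsFlat.sdiff_eq_image (hZ : IsFlat Z) (hcard : #Z = 8) (hP : IsPlane P) (hPZ : P ⊆ Z)
    (ha : a ∈ P) (hyZ : y ∈ Z) (hyP : y ∉ P) : Z \ P = P.image (· + (a + y)) := by
  symm
  refine Finset.eq_of_subset_of_card_le (fun w hw => ?_) ?_
  · obtain ⟨p, hp, rfl⟩ := Finset.mem_image.1 hw
    rw [← add_assoc, Finset.mem_sdiff]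
    refine ⟨hZ p (hPZ hp) a (hPZ ha) y hyZ, fun hmem => hyP ?_⟩
    have hy : p + a + (p + a + y) = y := by
      rw [← add_assoc, ZModModule.add_self, zero_add]
    exact hy ▸ hP.isFlat p hp a ha _ hmem
  · rw [Finset.card_image_of_injective _ (add_left_injective _), Finset.card_sdiff_of_subset hPZ,
      hcard, hP.1]

theorem IsFlat.exists_isPlane_subset (hZ : IsFlat Z) (hcard : #Z = 8) :
    ∃ P a y, IsPlane P ∧ P ⊆ Z ∧ a ∈ P ∧ y ∈ Z ∧ y ∉ P := by
  obtain ⟨a, ha, b, hb, c, hc, hab, hac, hbc⟩ := Finset.two_lt_card.1 (by lia : 2 < #Z)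
  have hP : IsPlane {a, b, c, a + b + c} := (isPlane_iff hab hac hbc).2 rfl
  obtain ⟨y, hy, hyP⟩ := Finset.exists_mem_notMem_of_card_lt_card
    (by rw [hP.1, hcard]; norm_num : #{a, b, c, a + b + c} < #Z)
  refine ⟨_, a, y, hP, ?_, by simp, hy, hyP⟩
  simp [Finset.insert_subset_iff, ha, hb, hc, hZ a ha b hb c hc]

theorem IsFlat.sum_eq_zero (hZ : IsFlat Z) (hcard : #Z = 8) : ∑ v ∈ Z, v = 0 := by
  obtain ⟨P, a, y, hP, hPZ, ha, hyZ, hyP⟩ := hZ.exists_isPlane_subset hcard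
  rw [← Finset.sum_sdiff hPZ, hZ.sdiff_eq_image hcard hP hPZ ha hyZ hyP,
    Finset.sum_image (add_left_injective _).injOn,
    sum_add_const_of_even (fun v : V => v) (a + y) (by rw [hP.1]; decide), hP.2, add_zero]

namespace IsAffineCode

variable {D : Finset (Finset V)} {O : Finset V}

theorem isFlat_of_card_eq_eight (h : IsAffineCode D) (hO : O ∈ D) (hcard : #O = 8) : IsFlat O :=
  isFlat_of_even_card_inter fun x hx => h.even_card_inter_octad hO hcard ((h.isTetrad_iff x).2 hx)

theorem isFlat_compl_of_card_eq_eight (h : IsAffineCode D) (hO : O ∈ D) (hcard : #O = 8) :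
    IsFlat Oᶜ := by
  refine isFlat_of_even_card_inter fun x hx => ?_
  have heven := h.even_card_inter_octad hO hcard ((h.isTetrad_iff x).2 hx)
  have hsplit := Finset.card_inter_add_card_sdiff x O
  rw [← Finset.sdiff_eq_inter_compl]
  rw [hx.1] at hsplit
  rw [Nat.even_iff] at *
  lia

theorem mem_of_isFlat (h : IsAffineCode D) (hZ : IsFlat Z) (hcard : #Z = 8) : Z ∈ D := by
  obtain ⟨P, a, y, hP, hPZ, ha, hyZ, hyP⟩ := hZ.exists_isPlane_subset hcard
  obtain ⟨O, hO, hO8, hsub⟩ := h.exists_octad_of_notMem_isTetrad ((h.isTetrad_iff P).2 hP) hyP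
  rw [Finset.insert_subset_iff] at hsub
  have hZ_sdiff := hZ.sdiff_eq_image hcard hP hPZ ha hyZ hyP
  have hO_sdiff :=
    (h.isFlat_of_card_eq_eight hO hO8).sdiff_eq_image hO8 hP hsub.2 ha hsub.1 hyP
  rwa [← Finset.sdiff_union_of_subset hPZ, hZ_sdiff, ← hO_sdiff,
    Finset.sdiff_union_of_subset hsub.2]

end IsAffineCode

end Flats

namespace IsPointedCode

variable {α : Type*} [Fintype α] [DecidableEq α] {D : Finset (Finset α)} {O c : Finset α}

theorem compl_mem_of_card_eq_eight (h : IsPointedCode D 4) (hO : O ∈ D) (hcard : #O = 8) :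
    Oᶜ ∈ D := by
  obtain ⟨T, hT⟩ := h.exists_card_eq_three
  obtain ⟨a, b, c, hab, hac, hbc, -⟩ := Finset.card_eq_three.1 hT
  obtain ⟨σ, -, -, -, -, hA⟩ := h.exists_isAffineCode_relabel hab hac hbc
  have hcompl : Oᶜ.map σ.toEmbedding = (O.map σ.toEmbedding)ᶜ := by
    rw [Finset.compl_eq_univ_sdiff, Finset.map_sdiff, Finset.univ_map_equiv_to_embedding,
      ← Finset.compl_eq_univ_sdiff]
  rw [← map_mem_relabel (σ := σ), hcompl]
  rw [← map_mem_relabel (σ := σ)] at hO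
  rw [← Finset.card_map σ.toEmbedding] at hcard
  exact hA.mem_of_isFlat (hA.isFlat_compl_of_card_eq_eight hO hcard)
    (by rw [Finset.card_compl, hcard, hA.card_univ])

theorem univ_mem (h : IsPointedCode D 4) : Finset.univ ∈ D := by
  obtain ⟨T, hT⟩ := h.exists_card_eq_three
  obtain ⟨p, q, -, hpq, -, -, -⟩ := Finset.card_eq_three.1 hT
  obtain ⟨O, hO, hcard, -, -⟩ := h.exists_octad_mem_notMem hpq
  have hO_translate : O ∈ translate O D := by
    rw [mem_translate, symmDiff_self]
    exact h.empty_mem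
  have hcompl := (isPointedCode_translate h hO).compl_mem_of_card_eq_eight hO_translate hcard
  rwa [mem_translate, compl_symmDiff_self] at hcompl

theorem compl_mem (h : IsPointedCode D 4) (hc : c ∈ D) : cᶜ ∈ D := by
  have huniv := (isPointedCode_translate h hc).univ_mem
  rwa [mem_translate, ← Finset.top_eq_univ, top_symmDiff] at huniv

end IsPointedCode

section HammingWords

theorem sum_symmDiff {α M : Type*} [DecidableEq α] [AddCommGroup M] [Module (ZMod 2) M]
    (f : α → M) (s t : Finset α) :
    ∑ p ∈ s ∆ t, f p = ∑ p ∈ s, f p + ∑ p ∈ t, f p := by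
  have hdisj : Disjoint (s \ t) (t \ s) := disjoint_sdiff_sdiff
  have hst : ∑ p ∈ s ∆ t, f p = ∑ p ∈ s \ t, f p + ∑ p ∈ t \ s, f p :=
    Finset.sum_union hdisj
  rw [hst, ← Finset.sum_inter_add_sum_sdiff s t f, ← Finset.sum_inter_add_sum_sdiff t s f,
    Finset.inter_comm t s, add_add_add_comm, ZModModule.add_self, zero_add]

variable {c c' x : Finset V}

/-- A codeword of the extended Hamming code of length 16, with coordinates indexed by `V`. -/
def IsHammingWord (c : Finset V) : Prop :=
  Even #c ∧ ∑ v ∈ c, v = 0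

instance : DecidablePred IsHammingWord :=
  fun _ => inferInstanceAs (Decidable (_ ∧ _))

theorem IsHammingWord.symmDiff (h : IsHammingWord c) (h' : IsHammingWord c') :
    IsHammingWord (c ∆ c') := by
  refine ⟨?_, by rw [sum_symmDiff, h.2, h'.2, add_zero]⟩
  have hcard := card_symmDiff_add_two_mul_card_inter c c'
  have heven := h.1.add h'.1
  rw [Nat.even_iff] at *
  lia

theorem IsHammingWord.of_compl (h : IsHammingWord cᶜ) : IsHammingWord c := by
  have := h.symmDiff (by decide +kernel : IsHammingWord Finset.univ)
  rwa [← Finset.top_eq_univ, symmDiff_top, hnot_eq_compl, compl_compl] at this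

theorem IsHammingWord.four_le_card (h : IsHammingWord c) (hne : c ≠ ∅) : 4 ≤ #c := by
  by_contra! hlt
  exact hne (eq_empty_of_even_of_sum_eq_zero (f := fun v : V => v) (B := c)
    Function.injective_id (fun x hx hfour => absurd (Finset.card_le_card hx) (by lia))
    subset_rfl h.1 hlt.le h.2)

theorem IsFlat.isHammingWord {Z : Finset V} (hZ : IsFlat Z) (hcard : #Z = 8) : IsHammingWord Z :=
  ⟨by rw [hcard]; decide, hZ.sum_eq_zero hcard⟩

namespace IsAffineCode

variable {D : Finset (Finset V)}

theorem isHammingWord_of_card_eq_six (h : IsAffineCode D) (hc : c ∈ D) (hcard : #c = 6) :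
    IsHammingWord c := by
  obtain ⟨p, hp, q, hq, r, hr, hpq, hpr, hqr⟩ := Finset.two_lt_card.1 (by lia : 2 < #c)
  obtain ⟨σ, -, -, -, hσc, hσ⟩ := exists_equiv_map_eq_stdHexad (f := fun v : V => v) h.card_univ
    (fun p q r => ⟨p + q + r, rfl⟩) hcard
    (fun _ => eq_empty_of_even_of_sum_eq_zero Function.injective_id fun x hx hfour hsum =>
      ((h.isTetrad_iff x).2 ⟨hfour, hsum⟩).2 c hc hcard hx) hp hq hr hpq hpr hqr
  have heven : Even #c := by rw [hcard]; decide
  refine ⟨heven, (hσ c heven).1 ?_⟩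
  have hsum : ∑ v ∈ stdHexad, v = 0 := by decide
  rwa [← hσc, Finset.sum_map] at hsum

theorem isHammingWord_of_card_le_eight (h : IsAffineCode D) (hc : c ∈ D) (hle : #c ≤ 8) :
    IsHammingWord c := by
  obtain rfl | hsix := h.eq_empty_or_six_le_card hc
  · exact ⟨by simp, rfl⟩
  obtain hcard | hcard : #c = 6 ∨ #c = 8 := by
    have := h.card_ne_seven hc
    lia
  · exact h.isHammingWord_of_card_eq_six hc hcard
  · exact (h.isFlat_of_card_eq_eight hc hcard).isHammingWord hcard

theorem isHammingWord (h : IsAffineCode D) (hc : c ∈ D) : IsHammingWord c := by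
  by_cases hle : #c ≤ 8
  · exact h.isHammingWord_of_card_le_eight hc hle
  · refine (h.isHammingWord_of_card_le_eight (h.compl_mem hc) ?_).of_compl
    rw [Finset.card_compl, h.card_univ]
    lia

theorem isAffineCode_translate (h : IsAffineCode D) (hc : c ∈ D) :
    IsAffineCode (translate c D) where
  toIsPointedCode := isPointedCode_translate h.toIsPointedCode hc
  isTetrad_iff x := by
    have hle : IsPlane ≤ IsTetrad (translate c D) := by
      refine fun x hx => ⟨hx.1, fun B hB hcard hxB => ?_⟩
      have hB_word : IsHammingWord B := by
        rw [← symmDiff_symmDiff_cancel_right c B]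
        exact (h.isHammingWord (mem_translate.1 hB)).symmDiff (h.isHammingWord hc)
      have hsdiff := hB_word.symmDiff ⟨by rw [hx.1]; decide, hx.2⟩
      rw [symmDiff_of_ge hxB] at hsdiff
      have hcard_sdiff : #(B \ x) = 2 := by rw [Finset.card_sdiff_of_subset hxB, hcard, hx.1]
      have := hsdiff.four_le_card (Finset.card_pos.1 (by rw [hcard_sdiff]; norm_num) |>.ne_empty)
      lia
    rw [isQuadrupleSystem_isPlane.eq_of_le
      (isPointedCode_translate h.toIsPointedCode hc).isQuadrupleSystem hle]

theorem symmDiff_mem_of_isFlat (h : IsAffineCode D) (hc : c ∈ D) {Z : Finset V} (hZ : IsFlat Z)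
    (hcard : #Z = 8) : Z ∆ c ∈ D :=
  mem_translate.1 ((h.isAffineCode_translate hc).mem_of_isFlat hZ hcard)

end IsAffineCode

end HammingWords

section QuadraticWords

/-- The word with characteristic function `k + l ⬝ᵥ v`: a codeword of the first-order Reed–Muller
code. -/
def affineWord (k : ZMod 2) (l : V) : Finset V :=
  {v | k + l ⬝ᵥ v = 1}

/-- The coefficients of a quadratic form in `v 0, …, v 3` without square terms, on the products
`01, 02, 03, 12, 13, 23` in this order. -/
abbrev QuadForm : Type := Fin 6 → ZMod 2

/-- The value of a quadratic form. -/
def quadEval (a : QuadForm) (v : V) : ZMod 2 :=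
  a 0 * (v 0 * v 1) + a 1 * (v 0 * v 2) + a 2 * (v 0 * v 3) + a 3 * (v 1 * v 2) +
    a 4 * (v 1 * v 3) + a 5 * (v 2 * v 3)

/-- The word whose characteristic function is a quadratic form. -/
def quadWord (a : QuadForm) : Finset V :=
  {v | quadEval a v = 1}

/-- The Pfaffian of the alternating bilinear form associated with `a`: it is nonzero when that form
is nondegenerate. -/
def pfaffian (a : QuadForm) : ZMod 2 :=
  a 0 * a 5 + a 1 * a 4 + a 2 * a 3

variable {k : ZMod 2} {l : V} {c : Finset V}

theorem isFlat_affineWord (k : ZMod 2) (l : V) : IsFlat (affineWord k l) := by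
  intro p hp q hq r hr
  simp only [affineWord, Finset.mem_filter, Finset.mem_univ, true_and] at *
  calc k + l ⬝ᵥ (p + q + r) = (k + l ⬝ᵥ p) + (k + l ⬝ᵥ q) + (k + l ⬝ᵥ r) - (k + k) := by
        rw [dotProduct_add, dotProduct_add]
        ring
    _ = 1 := by
        rw [hp, hq, hr, ZModModule.add_self k]
        decide

theorem card_affineWord : l ≠ 0 → #(affineWord k l) = 8 := by
  decide +revert +kernel

theorem affineWord_zero_right : affineWord k 0 = ∅ ∨ affineWord k 0 = Finset.univ := by
  decide +revert +kernel

theorem isHammingWord_affineWord : IsHammingWord (affineWord k l) := by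
  decide +revert +kernel

theorem isHammingWord_quadWord : ∀ a, IsHammingWord (quadWord a) := by
  decide +kernel

theorem filter_add_eq_one {α : Type*} [Fintype α] [DecidableEq α] (f g : α → ZMod 2) :
    ({v | f v + g v = 1} : Finset α) =
      ({v | f v = 1} : Finset α) ∆ ({v | g v = 1} : Finset α) := by
  have hadd : ∀ p q : ZMod 2, p + q = 1 ↔ p = 1 ∧ q ≠ 1 ∨ q = 1 ∧ p ≠ 1 := by decide
  ext v
  simp [Finset.mem_symmDiff, hadd]

theorem eq_empty_of_forall_three_le {r : Finset V} (hr : IsHammingWord r)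
    (hheavy : ∀ v ∈ r, 3 ≤ #{i | v i = 1}) : r = ∅ := by
  set s : Finset V := {v | 3 ≤ #{i | v i = 1}} with hs
  have hs_card : #s = 5 := by decide +kernel
  have hs_sum : ∑ v ∈ s, v = 0 := by decide +kernel
  have hrs : r ⊆ s := fun v hv => Finset.mem_filter.2 ⟨Finset.mem_univ v, hheavy v hv⟩
  by_contra hne
  obtain ⟨p, hp⟩ : ∃ p, s \ r = {p} := by
    rw [← Finset.card_eq_one, Finset.card_sdiff_of_subset hrs, hs_card]
    have := hr.four_le_card hne
    have := Finset.card_le_card hrs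
    obtain ⟨n, hn⟩ := hr.1
    lia
  have hp_zero : p = 0 := by
    rw [← Finset.sum_sdiff hrs, hp, Finset.sum_singleton, hr.2, add_zero] at hs_sum
    exact hs_sum
  have hp_mem : p ∈ s := (Finset.mem_sdiff.1 (hp ▸ Finset.mem_singleton_self p)).1
  simp [hp_zero, hs] at hp_mem

theorem quadWord_add (a b : QuadForm) : quadWord (a + b) = quadWord a ∆ quadWord b := by
  have hadd (v) : quadEval (a + b) v = quadEval a v + quadEval b v := by
    simp only [quadEval, Pi.add_apply]
    ring
  simp only [quadWord, hadd, filter_add_eq_one]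

theorem exists_card_affineWord_symmDiff_quadWord_eq_four :
    ∀ a ≠ 0, pfaffian a = 0 → ∃ k l, #(affineWord k l ∆ quadWord a) = 4 := by
  decide +kernel

/- The form is the part of degree at most 2 of the algebraic normal form of `χ`. -/
theorem exists_quadratic_eq_of_card_le_two (χ : V → ZMod 2) :
    ∃ k l a, ∀ v : V, #{i | v i = 1} ≤ 2 → k + l ⬝ᵥ v + quadEval a v = χ v := by
  obtain ⟨k, hk⟩ : ∃ k, χ 0 = k := ⟨_, rfl⟩
  obtain ⟨l, hl⟩ : ∃ l : V, ∀ i, χ (Pi.single i 1) = k + l i :=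
    ⟨fun i => k + χ (Pi.single i 1), fun i => by rw [← add_assoc, ZModModule.add_self, zero_add]⟩
  refine ⟨k, l, ![k + l 0 + l 1 + χ ![1, 1, 0, 0], k + l 0 + l 2 + χ ![1, 0, 1, 0],
    k + l 0 + l 3 + χ ![1, 0, 0, 1], k + l 1 + l 2 + χ ![0, 1, 1, 0],
    k + l 1 + l 3 + χ ![0, 1, 0, 1], k + l 2 + l 3 + χ ![0, 0, 1, 1]], fun v hv => ?_⟩
  have hlight : ∀ v : V, #{i | v i = 1} ≤ 2 → v = 0 ∨ (∃ i, v = Pi.single i 1) ∨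
      v ∈ [![1, 1, 0, 0], ![1, 0, 1, 0], ![1, 0, 0, 1], ![0, 1, 1, 0], ![0, 1, 0, 1],
        ![0, 0, 1, 1]] := by
    decide +kernel
  have hquad : ∀ (a : QuadForm) i, quadEval a (Pi.single i 1) = 0 := by decide +kernel
  obtain rfl | ⟨i, rfl⟩ | hpair := hlight v hv
  · simp [quadEval, hk]
  · simp [hquad, hl]
  · simp only [List.mem_cons, List.not_mem_nil, or_false] at hpair
    rcases hpair with rfl | rfl | rfl | rfl | rfl | rfl <;>
      simp [quadEval, dotProduct, Fin.sum_univ_four] <;> ring_nf <;> reduce_mod_char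

theorem IsHammingWord.exists_eq_symmDiff (hc : IsHammingWord c) :
    ∃ k l a, c = affineWord k l ∆ quadWord a := by
  obtain ⟨k, l, a, hχ⟩ := exists_quadratic_eq_of_card_le_two fun v => if v ∈ c then 1 else 0
  have hword : affineWord k l ∆ quadWord a =
      ({v | k + l ⬝ᵥ v + quadEval a v = 1} : Finset V) :=
    (filter_add_eq_one _ _).symm
  refine ⟨k, l, a, symmDiff_eq_bot.1 (eq_empty_of_forall_three_le
    (hc.symmDiff (isHammingWord_affineWord.symmDiff (isHammingWord_quadWord a))) fun v hv => ?_)⟩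
  by_contra! hlt
  simp [hword, Finset.mem_symmDiff, hχ v (by lia)] at hv

end QuadraticWords

namespace IsPointedCode

variable {α : Type*} [Fintype α] [DecidableEq α] {D : Finset (Finset α)} {x : Finset α}

theorem mul_eq_card_wordsThrough_mul (h : IsPointedCode D 4) {k w : ℕ}
    (hw : ∀ p ∉ x, #(wordsThrough D k (insert p x)) = w) :
    (16 - #x) * w = #(wordsThrough D k x) * (k - #x) := by
  rw [← sum_card_wordsThrough_insert, Finset.sum_congr rfl fun p hp => hw p (Finset.mem_compl.1 hp),
    Finset.sum_const, smul_eq_mul, Finset.card_compl, h.card_univ]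

theorem card_wordsThrough_six_empty (h : IsPointedCode D 4) : #(wordsThrough D 6 ∅) = 112 := by
  have hpair (x : Finset α) (hx : #x = 2) : #(wordsThrough D 6 x) = 14 := by
    have := h.mul_eq_card_wordsThrough_mul (k := 6) fun p hp =>
      h.card_wordsThrough_six_of_card_eq_three (by rw [Finset.card_insert_of_notMem hp, hx])
    rw [hx] at this
    lia
  have hpoint (x : Finset α) (hx : #x = 1) : #(wordsThrough D 6 x) = 42 := by
    have := h.mul_eq_card_wordsThrough_mul (k := 6) fun p hp =>
      hpair _ (by rw [Finset.card_insert_of_notMem hp, hx])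
    rw [hx] at this
    lia
  have := h.mul_eq_card_wordsThrough_mul (k := 6) fun p (_ : p ∉ (∅ : Finset α)) =>
    hpoint _ (by simp)
  rw [Finset.card_empty] at this
  lia

theorem two_hundred_twenty_five_le_card (h : IsPointedCode D 4) : 225 ≤ #D := by
  set W := wordsThrough D 6 ∅
  have hW (c : Finset α) (hc : c ∈ W) : c ∈ D ∧ #c = 6 :=
    ⟨(mem_wordsThrough.1 hc).1, (mem_wordsThrough.1 hc).2.1⟩
  have hcompl : ∀ c ∈ W.image compl, c ∈ D ∧ #c = 10 :=
    Finset.forall_mem_image.2 fun c hc =>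
      ⟨h.compl_mem (hW c hc).1, by rw [Finset.card_compl, h.card_univ, (hW c hc).2]⟩
  have hdisj : Disjoint W (W.image compl) :=
    Finset.disjoint_left.2 fun c hc hc' => by
      have := (hW c hc).2
      have := (hcompl c hc').2
      lia
  have hempty : ∅ ∉ W ∪ W.image compl := fun hmem => by
    obtain hc | hc := Finset.mem_union.1 hmem
    · simpa using (hW ∅ hc).2
    · simpa using (hcompl ∅ hc).2
  calc 225 = #(insert ∅ (W ∪ W.image compl)) := by
        rw [Finset.card_insert_of_notMem hempty, Finset.card_union_of_disjoint hdisj,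
          Finset.card_image_of_injective _ compl_injective, h.card_wordsThrough_six_empty]
    _ ≤ #D := Finset.card_le_card <| Finset.insert_subset h.empty_mem <| Finset.union_subset
        (fun c hc => (hW c hc).1) fun c hc => (hcompl c hc).1

end IsPointedCode

section KerdockSets

/-- The union of the cosets of the first-order Reed–Muller code represented by the quadratic forms
in `K`. -/
def quadraticCode (K : Finset QuadForm) : Finset (Finset V) :=
  (Finset.univ ×ˢ Finset.univ ×ˢ K).image fun t => affineWord t.1 t.2.1 ∆ quadWord t.2.2

theorem mem_quadraticCode {K : Finset QuadForm} {c : Finset V} :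
    c ∈ quadraticCode K ↔ ∃ k l, ∃ a ∈ K, affineWord k l ∆ quadWord a = c := by
  simp [quadraticCode]

theorem card_quadraticCode_le (K : Finset QuadForm) : #(quadraticCode K) ≤ 32 * #K := by
  refine Finset.card_image_le.trans_eq ?_
  rw [Finset.card_product, Finset.card_product, ← mul_assoc]
  rfl

namespace IsAffineCode

variable {D : Finset (Finset V)} {c : Finset V} {a b : QuadForm}

theorem affineWord_symmDiff_mem (h : IsAffineCode D) (hc : c ∈ D) (k : ZMod 2) (l : V) :
    affineWord k l ∆ c ∈ D := by
  by_cases hl : l = 0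
  · subst hl
    obtain hk | hk := affineWord_zero_right (k := k)
    · rwa [hk, ← Finset.bot_eq_empty, bot_symmDiff]
    · rw [hk, ← Finset.top_eq_univ, top_symmDiff]
      exact h.compl_mem hc
  · exact h.symmDiff_mem_of_isFlat hc (isFlat_affineWord k l) (card_affineWord hl)

theorem eq_quadraticCode (h : IsAffineCode D) : D = quadraticCode {a | quadWord a ∈ D} := by
  ext c
  simp only [mem_quadraticCode, Finset.mem_filter, Finset.mem_univ, true_and]
  constructor
  · intro hc
    obtain ⟨k, l, a, rfl⟩ := (h.isHammingWord hc).exists_eq_symmDiff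
    refine ⟨k, l, a, ?_, rfl⟩
    simpa [symmDiff_symmDiff_cancel_left] using h.affineWord_symmDiff_mem hc k l
  · rintro ⟨k, l, a, ha, rfl⟩
    exact h.affineWord_symmDiff_mem ha k l

theorem eight_le_card (h : IsAffineCode D) : 8 ≤ #{a | quadWord a ∈ D} := by
  have := h.two_hundred_twenty_five_le_card
  have := card_quadraticCode_le {a | quadWord a ∈ D}
  rw [← h.eq_quadraticCode] at this
  lia

theorem pfaffian_add_ne_zero (h : IsAffineCode D) (ha : quadWord a ∈ D) (hb : quadWord b ∈ D)
    (hab : a ≠ b) : pfaffian (a + b) ≠ 0 := by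
  intro hzero
  obtain ⟨k, l, hfour⟩ := exists_card_affineWord_symmDiff_quadWord_eq_four (a + b)
    (fun heq => hab (by rwa [add_eq_zero_iff_eq_neg, ZModModule.neg_eq_self] at heq)) hzero
  rw [quadWord_add, ← symmDiff_assoc] at hfour
  have hne : affineWord k l ∆ quadWord a ≠ quadWord b := fun heq => by simp [heq] at hfour
  have := h.six_le_card_symmDiff _ (h.affineWord_symmDiff_mem ha k l) _ hb hne
  lia

end IsAffineCode

/-- The eight quadratic forms, pairwise at nondegenerate differences, that represent the
Nordstrom–Robinson code. -/
def kerdockSet : Finset QuadForm :=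
  {a | a 3 = a 1 + a 2 + a 0 * a 1 ∧ a 4 = a 0 + a 1 + a 0 * a 2 ∧ a 5 = a 0 + a 2 + a 1 * a 2}

/-- The effect on quadratic forms of exchanging the last two coordinates of `V`. -/
def swapForm (a : QuadForm) : QuadForm :=
  ![a 0, a 2, a 1, a 4, a 3, a 5]

theorem mem_kerdockSet_or_swapForm_mem_kerdockSet :
    ∀ a, pfaffian a ≠ 0 → pfaffian (a + 1) ≠ 0 → a ∈ kerdockSet ∨ swapForm a ∈ kerdockSet := by
  decide +kernel

theorem eq_add_one_of_pfaffian_add_ne_zero :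
    ∀ a ∈ kerdockSet, swapForm a ∉ kerdockSet → ∀ b, swapForm b ∈ kerdockSet → b ∉ kerdockSet →
      pfaffian (a + b) ≠ 0 → b = a + 1 := by
  decide +kernel

/- The Pfaffian is quadratic, so its values at `b`, `b + 1`, `b + a` and `b + (a + 1)` add up to
`pfaffian 1 + pfaffian a + pfaffian (a + 1)`. -/
theorem pfaffian_eq_zero_of_ne_zero :
    ∀ a, pfaffian a ≠ 0 → pfaffian (a + 1) ≠ 0 → ∀ b, pfaffian b ≠ 0 → pfaffian (b + 1) ≠ 0 →
      pfaffian (b + a) ≠ 0 → pfaffian (b + (a + 1)) = 0 := by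
  decide +kernel

theorem eq_kerdockSet_or_eq_swap {K : Finset QuadForm} (hzero : 0 ∈ K) (hone : 1 ∈ K)
    (hK : ∀ a ∈ K, ∀ b ∈ K, a ≠ b → pfaffian (a + b) ≠ 0) (hcard : 8 ≤ #K) :
    K = kerdockSet ∨ K = ({a | swapForm a ∈ kerdockSet} : Finset QuadForm) := by
  suffices hsub : K ⊆ kerdockSet ∨ K ⊆ ({a | swapForm a ∈ kerdockSet} : Finset QuadForm) from
    hsub.imp
      (fun hle => Finset.eq_of_subset_of_card_le hle
        ((by decide +kernel : #kerdockSet ≤ 8).trans hcard))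
      (fun hle => Finset.eq_of_subset_of_card_le hle
        ((by decide +kernel : #({a | swapForm a ∈ kerdockSet} : Finset QuadForm) ≤ 8).trans hcard))
  have hpfaffian (a : QuadForm) (ha : a ∈ K) (ha_zero : a ≠ 0) : pfaffian a ≠ 0 := by
    simpa using hK a ha 0 hzero ha_zero
  have hcases (a : QuadForm) (ha : a ∈ K) : a ∈ kerdockSet ∨ swapForm a ∈ kerdockSet := by
    by_cases ha_zero : a = 0
    · exact Or.inl (ha_zero ▸ by decide)
    by_cases ha_one : a = 1
    · exact Or.inl (ha_one ▸ by decide)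
    exact mem_kerdockSet_or_swapForm_mem_kerdockSet a (hpfaffian a ha ha_zero)
      (hK a ha 1 hone ha_one)
  by_contra! hnot
  simp only [Finset.not_subset, Finset.mem_filter, Finset.mem_univ, true_and] at hnot
  obtain ⟨⟨b, hb, hb_fst⟩, a, ha, ha_snd⟩ := hnot
  have ha_fst := (hcases a ha).resolve_right ha_snd
  have hb_snd := (hcases b hb).resolve_left hb_fst
  obtain rfl := eq_add_one_of_pfaffian_add_ne_zero a ha_fst ha_snd b hb_snd hb_fst
    (hK a ha b hb (fun heq => hb_fst (heq ▸ ha_fst)))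
  obtain ⟨d, hd, hd_notMem⟩ := Finset.exists_mem_notMem_of_card_lt_card
    (Finset.card_le_four.trans_lt (by lia : 4 < #K) : #{0, 1, a, a + 1} < #K)
  simp only [Finset.mem_insert, Finset.mem_singleton, not_or] at hd_notMem
  obtain ⟨hd_zero, hd_one, hd_a, hd_add⟩ := hd_notMem
  exact hK d hd _ hb hd_add (pfaffian_eq_zero_of_ne_zero a
    (hpfaffian a ha fun h => ha_snd (h ▸ by decide))
    (hK a ha 1 hone fun h => ha_snd (h ▸ by decide)) d
    (hpfaffian d hd hd_zero) (hK d hd 1 hone hd_one) (hK d hd a ha hd_a))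

/-- The permutation of `V` exchanging the last two coordinates. -/
def coordSwap : V ≃ V :=
  (Equiv.swap 2 3).arrowCongr (Equiv.refl _)

theorem map_coordSwap_affineWord : ∀ k l,
    (affineWord k l).map coordSwap.toEmbedding = affineWord k (coordSwap l) := by
  decide +kernel

theorem map_coordSwap_quadWord : ∀ a,
    (quadWord a).map coordSwap.toEmbedding = quadWord (swapForm a) := by
  decide +kernel

theorem relabel_coordSwap_quadraticCode (K : Finset QuadForm) :
    relabel coordSwap (quadraticCode {a | swapForm a ∈ K}) = quadraticCode K := by
  have hinvol : ∀ a, swapForm (swapForm a) = a := by decide +kernel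
  have hmap (k l a) : (affineWord k l ∆ quadWord a).map coordSwap.toEmbedding =
      affineWord k (coordSwap l) ∆ quadWord (swapForm a) := by
    rw [← map_coordSwap_affineWord, ← map_coordSwap_quadWord]
    simp only [Finset.map_eq_image]
    exact Finset.image_symmDiff _ _ coordSwap.injective
  ext c
  obtain ⟨c, rfl⟩ := coordSwap.finsetCongr.surjective c
  rw [Equiv.finsetCongr_apply, map_mem_relabel]
  simp only [mem_quadraticCode, Finset.mem_filter, Finset.mem_univ, true_and]
  constructor
  · rintro ⟨k, l, a, ha, rfl⟩
    exact ⟨k, coordSwap l, swapForm a, ha, (hmap k l a).symm⟩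
  · rintro ⟨k, l, a, ha, heq⟩
    refine ⟨k, coordSwap.symm l, swapForm a, (hinvol a).symm ▸ ha, ?_⟩
    apply Finset.map_injective coordSwap.toEmbedding
    rw [hmap, coordSwap.apply_symm_apply, hinvol, heq]

/-- The Nordstrom–Robinson code. -/
def nordstromRobinson : Finset (Finset V) :=
  quadraticCode kerdockSet

theorem IsAffineCode.eq_nordstromRobinson_or_relabel_eq {D : Finset (Finset V)}
    (h : IsAffineCode D) (hhexad : stdHexad ∈ D) :
    D = nordstromRobinson ∨ relabel coordSwap D = nordstromRobinson := by
  have hzero : quadWord 0 ∈ D := by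
    rw [(by decide +kernel : quadWord 0 = ∅)]
    exact h.empty_mem
  have hone : quadWord 1 ∈ D := by
    rw [(by decide +kernel : quadWord 1 = affineWord 1 0 ∆ stdHexad)]
    exact h.affineWord_symmDiff_mem hhexad 1 0
  obtain hK | hK := eq_kerdockSet_or_eq_swap (K := {a | quadWord a ∈ D}) (by simpa) (by simpa)
    (fun a ha b hb => h.pfaffian_add_ne_zero (Finset.mem_filter.1 ha).2 (Finset.mem_filter.1 hb).2)
    h.eight_le_card
  · exact Or.inl (by rw [h.eq_quadraticCode, hK, nordstromRobinson])
  · exact Or.inr (by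
      rw [h.eq_quadraticCode, hK, relabel_coordSwap_quadraticCode, nordstromRobinson])

end KerdockSets

section Uniqueness

variable {α β : Type*} {D D' : Finset (Finset α)} {T u u' : Finset α} {a b c : α}

theorem relabel_injective (σ : α ≃ β) : Function.Injective (relabel σ) :=
  Finset.map_injective _

theorem relabel_trans {γ : Type*} (σ : α ≃ β) (τ : β ≃ γ) (D : Finset (Finset α)) :
    relabel (σ.trans τ) D = relabel τ (relabel σ D) := by
  rw [relabel, ← Equiv.finsetCongr_trans, relabel, relabel, Finset.map_map]
  rfl

theorem exists_perm_map_eq [Finite α] (h : #u = #u') :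
    ∃ π : Equiv.Perm α, u.map π.toEmbedding = u' := by
  classical
  have := Fintype.ofFinite α
  refine ⟨(Finset.equivOfCardEq h).extendSubtype, Finset.eq_of_subset_of_card_le (fun q hq => ?_)
    (by rw [Finset.card_map, h])⟩
  obtain ⟨p, hp, rfl⟩ := Finset.mem_map.1 hq
  exact (Finset.equivOfCardEq h).extendSubtype_mem p hp

variable [DecidableEq α]

/-- A word of least weight in its translate of `D`: a coset leader when `D` is linear. -/
def IsLeader (D : Finset (Finset α)) (u : Finset α) : Prop :=
  ∀ c ∈ D, #u ≤ #(u ∆ c)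

variable [Fintype α]

namespace IsPointedCode

theorem exists_relabel_eq_nordstromRobinson (h : IsPointedCode D 4) (hab : a ≠ b) (hac : a ≠ c)
    (hbc : b ≠ c) : ∃ σ : α ≃ V, σ a = 0 ∧ σ b = Pi.single 0 1 ∧ σ c = Pi.single 1 1 ∧
      relabel σ D = nordstromRobinson := by
  obtain ⟨σ, hσa, hσb, hσc, hhexad, hσ⟩ := h.exists_isAffineCode_relabel hab hac hbc
  obtain heq | heq := hσ.eq_nordstromRobinson_or_relabel_eq hhexad
  · exact ⟨σ, hσa, hσb, hσc, heq⟩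
  · refine ⟨σ.trans coordSwap, ?_, ?_, ?_, by rw [relabel_trans, heq]⟩
    · rw [Equiv.trans_apply, hσa]
      decide
    · rw [Equiv.trans_apply, hσb]
      decide
    · rw [Equiv.trans_apply, hσc]
      decide

theorem exists_relabel_eq_of_card_eq_three (h : IsPointedCode D 4) (h' : IsPointedCode D' 4)
    (hT : #T = 3) (π : Equiv.Perm α) :
    ∃ ρ : Equiv.Perm α, relabel ρ D = D' ∧ ∀ p ∈ T, ρ p = π p := by
  obtain ⟨a, b, c, hab, hac, hbc, rfl⟩ := Finset.card_eq_three.1 hT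
  obtain ⟨σ, hσa, hσb, hσc, hσ⟩ := h.exists_relabel_eq_nordstromRobinson hab hac hbc
  obtain ⟨σ', hσ'a, hσ'b, hσ'c, hσ'⟩ := h'.exists_relabel_eq_nordstromRobinson
    (π.injective.ne hab) (π.injective.ne hac) (π.injective.ne hbc)
  refine ⟨σ.trans σ'.symm, ?_, ?_⟩
  · apply relabel_injective σ'
    rw [← relabel_trans, Equiv.trans_assoc, Equiv.symm_trans_self, Equiv.trans_refl, hσ, hσ']
  · simp [hσa, hσb, hσc, Equiv.symm_apply_eq, hσ'a, hσ'b, hσ'c]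

theorem exists_relabel_eq_of_card_le_three (h : IsPointedCode D 4) (h' : IsPointedCode D' 4)
    (hle : #u ≤ 3) (hcard : #u = #u') :
    ∃ ρ : Equiv.Perm α, relabel ρ D = D' ∧ u.map ρ.toEmbedding = u' := by
  obtain ⟨π, rfl⟩ := exists_perm_map_eq hcard
  obtain ⟨T, huT, hT⟩ := Finset.exists_superset_card_eq hle
    (by rw [h.card_univ]; norm_num)
  obtain ⟨ρ, hρ, hπ⟩ := h.exists_relabel_eq_of_card_eq_three h' hT π
  refine ⟨ρ, hρ, ?_⟩
  simp only [Finset.map_eq_image]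
  exact Finset.image_congr fun p hp => hπ p (huT hp)

theorem exists_relabel_eq_of_isTetrad (h : IsPointedCode D 4) (h' : IsPointedCode D' 4)
    (hu : IsTetrad D u) (hu' : IsTetrad D' u') :
    ∃ ρ : Equiv.Perm α, relabel ρ D = D' ∧ u.map ρ.toEmbedding = u' := by
  obtain ⟨p, T, hp, rfl, hT⟩ := Finset.card_eq_succ.1 hu.1
  obtain ⟨p', T', hp', rfl, hT'⟩ := Finset.card_eq_succ.1 hu'.1
  obtain ⟨ρ, rfl, rfl⟩ := h.exists_relabel_eq_of_card_le_three h' hT.le (hT.trans hT'.symm)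
  refine ⟨ρ, rfl, ?_⟩
  rw [← isTetrad_relabel (σ := ρ)] at hu
  rw [Finset.map_insert] at hu ⊢
  rw [(h'.existsUnique_isTetrad hT').unique
    ⟨by simpa using hp, hu⟩ ⟨hp', hu'⟩]

theorem card_le_three_or_isTetrad (h : IsPointedCode D 4) (hu : IsLeader D u) :
    #u ≤ 3 ∨ IsTetrad D u := by
  refine or_iff_not_imp_right.2 fun ht => ?_
  by_contra! hlt
  obtain ⟨B, hB, hB_card, hinter⟩ : ∃ B ∈ D, #B = 6 ∧ 4 ≤ #(B ∩ u) := by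
    obtain hfour | hfive := Nat.eq_or_lt_of_le hlt
    · simp only [IsTetrad, ← hfour, true_and, not_forall, not_not] at ht
      obtain ⟨B, hB, hB_card, hsub⟩ := ht
      exact ⟨B, hB, hB_card, by rw [Finset.inter_eq_right.2 hsub, ← hfour]⟩
    · exact h.exists_hexad_of_five_le_card hfive
  have := hu B hB
  have := card_symmDiff_add_two_mul_card_inter u B
  rw [Finset.inter_comm] at this
  lia

theorem exists_relabel_eq_of_isLeader (h : IsPointedCode D 4) (h' : IsPointedCode D' 4)
    (hu : IsLeader D u) (hu' : IsLeader D' u') (hcard : #u = #u') :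
    ∃ ρ : Equiv.Perm α, relabel ρ D = D' ∧ u.map ρ.toEmbedding = u' := by
  obtain hle | ht := h.card_le_three_or_isTetrad hu
  · exact h.exists_relabel_eq_of_card_le_three h' hle hcard
  · have := ht.1
    exact h.exists_relabel_eq_of_isTetrad h' ht
      ((h'.card_le_three_or_isTetrad hu').resolve_left (by lia))

end IsPointedCode

end Uniqueness

end NordstromRobinson

section HammingSpace

open NordstromRobinson

open scoped Pointwise

variable {m : ℕ} {C : Set (Fin m → ZMod 2)} {f : Equiv.Perm (Fin m → ZMod 2)}
  {c x y : Fin m → ZMod 2}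

theorem exists_hammingDist_eq_distToCode (hC : C.Nonempty) (x : Fin m → ZMod 2) :
    ∃ c ∈ C, hammingDist x c = distToCode C x :=
  let ⟨c, hc⟩ := hC
  Nat.sInf_mem (s := {d | ∃ c ∈ C, hammingDist x c = d}) ⟨hammingDist x c, c, hc, rfl⟩

theorem distToCode_le (x : Fin m → ZMod 2) (hc : c ∈ C) : distToCode C x ≤ hammingDist x c :=
  Nat.sInf_le ⟨c, hc, rfl⟩

/-- The automorphism group of the Hamming graph. -/
def hammingAutGroup (m : ℕ) : Subgroup (Equiv.Perm (Fin m → ZMod 2)) where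
  carrier := {f | IsHammingAut f}
  one_mem' := ⟨1, 0, fun x => (add_zero x).symm⟩
  mul_mem' := by
    rintro f g ⟨σ, v, hf⟩ ⟨τ, w, hg⟩
    refine ⟨σ * τ, (fun i => w (σ.symm i)) + v, fun x => ?_⟩
    rw [Equiv.Perm.mul_apply, hg, hf, ← add_assoc]
    rfl
  inv_mem' := by
    rintro f ⟨σ, v, hf⟩
    refine ⟨σ.symm, -fun i => v (σ i), fun x => ?_⟩
    rw [Equiv.Perm.inv_eq_iff_eq, hf]
    ext i
    simp [add_assoc, ZModModule.add_self]

theorem IsHammingAut.hammingDist_apply (hf : IsHammingAut f) (x y : Fin m → ZMod 2) :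
    hammingDist (f x) (f y) = hammingDist x y := by
  obtain ⟨σ, v, hf⟩ := hf
  rw [hf, hf]
  refine Finset.card_equiv σ.symm fun i => ?_
  simp

theorem IsHammingAut.distToCode_apply (hf : IsHammingAut f) (hfC : f • C = C)
    (x : Fin m → ZMod 2) : distToCode C (f x) = distToCode C x := by
  conv_lhs => rw [← hfC]
  simp only [distToCode, ← Set.image_smul, Set.exists_mem_image, Equiv.Perm.smul_def,
    hf.hammingDist_apply]

theorem isCompletelyTransitive_of_forall_distToCode_eq
    (h : ∀ x y, distToCode C x = distToCode C y → ∃ f, IsHammingAut f ∧ f • C = C ∧ f x = y) :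
    IsCompletelyTransitive C := by
  refine ⟨hammingAutGroup m ⊓ MulAction.stabilizer _ C, fun f hf => hf, ?_⟩
  rintro i x rfl
  ext y
  constructor
  · intro hy
    obtain ⟨f, hf, hfC, hfx⟩ := h x y hy.symm
    exact ⟨f, ⟨hf, hfC⟩, hfx⟩
  · rintro ⟨f, ⟨hf, hfC⟩, rfl⟩
    exact hf.distToCode_apply hfC x

/-- The bijection sending `x` to the set of coordinates where it differs from `c`. -/
def diffEquiv (c : Fin m → ZMod 2) : (Fin m → ZMod 2) ≃ Finset (Fin m) where
  toFun x := {i | x i ≠ c i}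
  invFun s i := if i ∈ s then c i + 1 else c i
  left_inv x := by
    have hbit : ∀ p q : ZMod 2, (if p ≠ q then q + 1 else q) = p := by decide
    ext i
    simpa using hbit (x i) (c i)
  right_inv s := by
    ext i
    by_cases hi : i ∈ s <;> simp [hi]

theorem card_diffEquiv (c x : Fin m → ZMod 2) : #(diffEquiv c x) = hammingDist x c :=
  rfl

theorem diffEquiv_self (c : Fin m → ZMod 2) : diffEquiv c c = ∅ := by
  simp [diffEquiv]

theorem card_diffEquiv_symmDiff (c x y : Fin m → ZMod 2) :
    #(diffEquiv c x ∆ diffEquiv c y) = hammingDist x y := by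
  have hbit : ∀ p q r : ZMod 2, (p ≠ r ∧ ¬ q ≠ r) ∨ (q ≠ r ∧ ¬ p ≠ r) ↔ p ≠ q := by decide
  rw [hammingDist]
  congr 1
  ext i
  simp only [diffEquiv, Equiv.coe_fn_mk, Finset.mem_symmDiff, Finset.mem_filter, Finset.mem_univ,
    true_and, hbit]

/-- The family of the sets where the codewords of `C` differ from `c`: the code `C` translated so
that `c` becomes the zero word. -/
noncomputable def pointedAt (C : Set (Fin m → ZMod 2)) (c : Fin m → ZMod 2) :
    Finset (Finset (Fin m)) :=
  C.toFinite.toFinset.map (diffEquiv c).toEmbedding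

theorem diffEquiv_mem_pointedAt : diffEquiv c x ∈ pointedAt C c ↔ x ∈ C := by
  rw [pointedAt, ← Equiv.coe_toEmbedding, Finset.mem_map', Set.Finite.mem_toFinset]

theorem forall_mem_pointedAt {p : Finset (Fin m) → Prop} :
    (∀ s ∈ pointedAt C c, p s) ↔ ∀ x ∈ C, p (diffEquiv c x) := by
  simp only [pointedAt, Finset.forall_mem_map, Set.Finite.mem_toFinset]
  rfl

theorem isHammingAut_of_diffEquiv_eq_map {c' : Fin m → ZMod 2} {ρ : Equiv.Perm (Fin m)}
    (hf : ∀ x, diffEquiv c' (f x) = (diffEquiv c x).map ρ.toEmbedding) : IsHammingAut f := by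
  have hbit : ∀ p q r s : ZMod 2, (p ≠ q ↔ r ≠ s) → p = r + (s + q) := by decide
  refine ⟨ρ, fun i => c (ρ.symm i) + c' i, fun x => funext fun i => hbit _ _ _ _ ?_⟩
  simpa [diffEquiv, Finset.mem_map_equiv] using Finset.ext_iff.1 (hf x) i

theorem exists_isHammingAut_of_relabel_eq {c' : Fin m → ZMod 2} {ρ : Equiv.Perm (Fin m)}
    (hρ : relabel ρ (pointedAt C c) = pointedAt C c')
    (hxy : (diffEquiv c x).map ρ.toEmbedding = diffEquiv c' y) :
    ∃ f, IsHammingAut f ∧ f • C = C ∧ f x = y := by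
  set f : Equiv.Perm (Fin m → ZMod 2) :=
    (diffEquiv c).trans (ρ.finsetCongr.trans (diffEquiv c').symm) with hf
  have hf_apply (z) : diffEquiv c' (f z) = (diffEquiv c z).map ρ.toEmbedding := by simp [hf]
  have hmem (z) : f z ∈ C ↔ z ∈ C := by
    rw [← diffEquiv_mem_pointedAt (c := c'), hf_apply, ← hρ, map_mem_relabel,
      diffEquiv_mem_pointedAt]
  refine ⟨f, isHammingAut_of_diffEquiv_eq_map hf_apply, ?_,
    (diffEquiv c').injective ((hf_apply x).trans hxy)⟩
  ext z
  rw [Set.mem_smul_set_iff_inv_smul_mem, ← hmem, ← Equiv.Perm.smul_def, smul_inv_smul]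

theorem isLeader_pointedAt (h : hammingDist x c = distToCode C x) :
    IsLeader (pointedAt C c) (diffEquiv c x) :=
  forall_mem_pointedAt.2 fun y hy => by
    rw [card_diffEquiv, card_diffEquiv_symmDiff, h]
    exact distToCode_le x hy

theorem IsMinDist.distToCode_eq_three (h : IsMinDist C 6) (hc : c ∈ C)
    (hx : hammingDist x c = 3) : distToCode C x = 3 := by
  refine ((distToCode_le x hc).trans_eq hx).antisymm ?_
  obtain ⟨c', hc', hdist⟩ := exists_hammingDist_eq_distToCode ⟨c, hc⟩ x
  rw [← hdist]
  by_cases heq : c = c'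
  · rw [← heq, hx]
  · have := h.1 c hc c' hc' heq
    have := hammingDist_triangle_left c c' x
    lia

theorem IsMinDist.isPointedCode_pointedAt {C : Set (Fin 16 → ZMod 2)} {c : Fin 16 → ZMod 2}
    {L : ℕ} (h : IsMinDist C 6) (hL : 0 < L)
    (hcount : ∀ γ, distToCode C γ = 3 → {c ∈ C | hammingDist γ c = 3}.ncard = L + 1)
    (hc : c ∈ C) : IsPointedCode (pointedAt C c) L where
  card_univ := Fintype.card_fin 16
  empty_mem := diffEquiv_self c ▸ diffEquiv_mem_pointedAt.2 hc
  six_le_card_symmDiff := by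
    simp only [forall_mem_pointedAt, card_diffEquiv_symmDiff, ne_eq, EmbeddingLike.apply_eq_iff_eq]
    exact h.1
  card_at_three s := by
    classical
    obtain ⟨γ, rfl⟩ := (diffEquiv c).surjective s
    rintro ⟨t, ht, hthree⟩
    obtain ⟨x, rfl⟩ := (diffEquiv c).surjective t
    rw [diffEquiv_mem_pointedAt] at ht
    rw [card_diffEquiv_symmDiff] at hthree
    rw [← hcount γ (h.distToCode_eq_three ht hthree), pointedAt, Finset.filter_map,
      Finset.card_map, ← Set.ncard_coe_finset]
    congr 1
    ext y
    simp [card_diffEquiv_symmDiff]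
  pos := hL

theorem IsMinDist.exists_two_le_ncard (h : IsMinDist C 6) :
    ∃ γ, distToCode C γ = 3 ∧ 2 ≤ {c ∈ C | hammingDist γ c = 3}.ncard := by
  obtain ⟨x, hx, y, hy, hne, hxy⟩ := h.2
  obtain ⟨s, hs, hcard⟩ : ∃ s ⊆ diffEquiv x y, #s = 3 :=
    Finset.exists_subset_card_eq (by rw [card_diffEquiv, hammingDist_comm, hxy]; norm_num)
  obtain ⟨γ, rfl⟩ := (diffEquiv x).surjective s
  have hγx : hammingDist γ x = 3 := hcard
  have hγy : hammingDist γ y = 3 := by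
    rw [← card_diffEquiv_symmDiff x, symmDiff_of_le hs, Finset.card_sdiff_of_subset hs, hcard,
      card_diffEquiv, hammingDist_comm, hxy]
  refine ⟨γ, h.distToCode_eq_three hx hγx, ?_⟩
  calc 2 = ({x, y} : Set (Fin m → ZMod 2)).ncard := (Set.ncard_pair hne).symm
    _ ≤ {c ∈ C | hammingDist γ c = 3}.ncard := Set.ncard_le_ncard (by
      rintro z (rfl | rfl)
      exacts [⟨hx, hγx⟩, ⟨hy, hγy⟩])

theorem IsMinDist.isPointedCode_pointedAt_four {C : Set (Fin 16 → ZMod 2)} {c : Fin 16 → ZMod 2}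
    (h : IsMinDist C 6)
    (hcount : ∀ γ γ', distToCode C γ = 3 → distToCode C γ' = 3 →
      {c ∈ C | hammingDist γ c = 3}.ncard = {c ∈ C | hammingDist γ' c = 3}.ncard)
    (hc : c ∈ C) : IsPointedCode (pointedAt C c) 4 := by
  obtain ⟨γ, hγ, htwo⟩ := h.exists_two_le_ncard
  obtain ⟨L, hL⟩ := Nat.exists_eq_add_of_le htwo
  have hpointed := h.isPointedCode_pointedAt (L := L + 1) L.succ_pos
    (fun γ' hγ' => by rw [hcount γ' γ hγ' hγ, hL]; lia) hc
  exact hpointed.eq_four ▸ hpointed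

end HammingSpace

open NordstromRobinson in
theorem stmt_2_general (C : Set (Fin 16 → ZMod 2)) (hd : IsMinDist C 6)
    (hthree : ∀ γ γ', distToCode C γ = 3 → distToCode C γ' = 3 →
      {c ∈ C | hammingDist γ c = 3}.ncard = {c ∈ C | hammingDist γ' c = 3}.ncard) :
    IsCompletelyTransitive C := by
  refine isCompletelyTransitive_of_forall_distToCode_eq fun x y hxy => ?_
  have hC : C.Nonempty := hd.2.imp fun _ h => h.1
  obtain ⟨c, hc, hxc⟩ := exists_hammingDist_eq_distToCode hC x
  obtain ⟨c', hc', hyc'⟩ := exists_hammingDist_eq_distToCode hC y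
  obtain ⟨ρ, hρ, hmap⟩ :=
    (hd.isPointedCode_pointedAt_four hthree hc).exists_relabel_eq_of_isLeader
    (hd.isPointedCode_pointedAt_four hthree hc') (isLeader_pointedAt hxc) (isLeader_pointedAt hyc')
    (by rw [card_diffEquiv, card_diffEquiv, hxc, hyc', hxy])
  exact exists_isHammingAut_of_relabel_eq hρ hmap

/-- Every binary completely regular code of length 16 with minimum distance 6 is
completely transitive. -/
theorem stmt_2 (C : Set (Fin 16 → ZMod 2)) (hC : C.Nonempty)
    (hreg : IsCompletelyRegular C) (hd : IsMinDist C 6) :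
    IsCompletelyTransitive C :=
  stmt_2_general C hd fun γ γ' hγ hγ' => hreg γ γ' (hγ.trans hγ'.symm) 3
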